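/- Let f ∈ m^2 ∖ m^3 have an isolated singularity at the origin, let h ∈ m^2 have an isolated singularity at the origin, and set X = h^{-1}(0). Suppose there exists δ ∈ Θ_X with δ(0) = 0 and δ(f) = f whose eigenvalues sp(δ) = (w'_1,...,w'_n) are rational and at least one of them is non-positive. Then μ_X(f) = ∞ (i.e. dim_ℂ O_n/df(Θ_X) is infinite). -/

import Mathlib

open Filter Topology Polynomial

set_option maxHeartbeats 1000000
set_option synthInstance.maxHeartbeats 1000000

noncomputable section

/-- The algebra structure on germs of complex valued functions. -/
instance Filter.Germ.instAlgebraComplex {α : Type*} (l : Filter α) :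
    Algebra ℂ (Filter.Germ l ℂ) where
  algebraMap := (Filter.Germ.coeRingHom l).comp (algebraMap ℂ (α → ℂ))
  commutes' := fun c g => mul_comm _ _
  smul_def' := fun c g => Filter.Germ.inductionOn g fun f => rfl

/-- The local algebra `𝒪ₙ` of germs at `0 ∈ ℂⁿ` of holomorphic functions,
realized as the subalgebra of germs at `0` admitting an analytic representative. -/
def On (n : ℕ) : Subalgebra ℂ (Filter.Germ (𝓝 (0 : Fin n → ℂ)) ℂ) where
  carrier := {g | ∃ f : (Fin n → ℂ) → ℂ,
    AnalyticAt ℂ f 0 ∧ (f : Filter.Germ (𝓝 (0 : Fin n → ℂ)) ℂ) = g}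
  mul_mem' := by
    rintro a b ⟨f, hf, rfl⟩ ⟨g, hg, rfl⟩
    exact ⟨f * g, hf.mul hg, rfl⟩
  add_mem' := by
    rintro a b ⟨f, hf, rfl⟩ ⟨g, hg, rfl⟩
    exact ⟨f + g, hf.add hg, rfl⟩
  algebraMap_mem' := fun c => ⟨fun _ => c, analyticAt_const, rfl⟩

variable {n : ℕ}

/-- Existence of an analytic representative for an element of `𝒪ₙ`. -/
lemma On.exists_rep (g : On n) : ∃ f : (Fin n → ℂ) → ℂ,
    AnalyticAt ℂ f 0 ∧ (f : Filter.Germ (𝓝 (0 : Fin n → ℂ)) ℂ) = (g : Filter.Germ _ ℂ) :=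
  g.2

/-- A chosen analytic representative of a germ in `𝒪ₙ`. -/
def On.rep (g : On n) : (Fin n → ℂ) → ℂ := (On.exists_rep g).choose

lemma On.rep_analyticAt (g : On n) : AnalyticAt ℂ (On.rep g) 0 :=
  (On.exists_rep g).choose_spec.1

lemma On.rep_spec (g : On n) :
    (On.rep g : Filter.Germ (𝓝 (0 : Fin n → ℂ)) ℂ) = (g : Filter.Germ _ ℂ) :=
  (On.exists_rep g).choose_spec.2

/-- Build an element of `𝒪ₙ` from an analytic function. -/
def mkOn {n : ℕ} (f : (Fin n → ℂ) → ℂ) (hf : AnalyticAt ℂ f 0) : On n :=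
  ⟨(f : Filter.Germ (𝓝 (0 : Fin n → ℂ)) ℂ), ⟨f, hf, rfl⟩⟩

/-- The `i`-th partial derivative, as an operation on `𝒪ₙ`. -/
def pd (i : Fin n) (g : On n) : On n :=
  mkOn (fun x => fderiv ℂ (On.rep g) x (Pi.single i 1)) (by
    have h := ((ContinuousLinearMap.apply ℂ ℂ (Pi.single i 1)).analyticAt
      (fderiv ℂ (On.rep g) 0)).comp (On.rep_analyticAt g).fderiv
    exact h)

/-- Restriction of germs at `0` to germs along a finer filter. -/
def restrictGerm {l : Filter (Fin n → ℂ)} (hl : l ≤ 𝓝 (0 : Fin n → ℂ)) :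
    Filter.Germ (𝓝 (0 : Fin n → ℂ)) ℂ →+* Filter.Germ l ℂ where
  toFun g := g.compTendsto id (Filter.tendsto_id'.2 hl)
  map_one' := rfl
  map_mul' a b := Filter.Germ.inductionOn₂ a b fun f g => rfl
  map_zero' := rfl
  map_add' a b := Filter.Germ.inductionOn₂ a b fun f g => rfl

/-- Evaluation of germs restricted along `l ≤ 𝓝 0`, as a ring homomorphism on `𝒪ₙ`. -/
def restrictOn (n : ℕ) {l : Filter (Fin n → ℂ)} (hl : l ≤ 𝓝 (0 : Fin n → ℂ)) :
    On n →+* Filter.Germ l ℂ :=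
  (restrictGerm hl).comp (On n).val.toRingHom

/-- The ideal `I_X ⊆ 𝒪ₙ` of germs vanishing on a set `X` near `0`. -/
def IX (n : ℕ) (X : Set (Fin n → ℂ)) : Ideal (On n) :=
  RingHom.ker (restrictOn n (nhdsWithin_le_nhds (s := X)))

/-- The maximal ideal `𝔪 ⊂ 𝒪ₙ` of germs vanishing at the origin. -/
def mId (n : ℕ) : Ideal (On n) :=
  RingHom.ker (restrictOn n (pure_le_nhds (0 : Fin n → ℂ)))

/-- `X` is the germ at `0` of an analytic variety: `0 ∈ X` and, near `0`, `X` coincides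
with the common zero locus of finitely many holomorphic functions. -/
def IsAnalyticGermAt0 (n : ℕ) (X : Set (Fin n → ℂ)) : Prop :=
  (0 : Fin n → ℂ) ∈ X ∧
    ∃ (m : ℕ) (g : Fin m → (Fin n → ℂ) → ℂ),
      (∀ j, AnalyticAt ℂ (g j) 0) ∧
      ∀ᶠ x in 𝓝 (0 : Fin n → ℂ), (x ∈ X ↔ ∀ j, g j x = 0)

/-- The action `δ(g) = Σ δᵢ ∂g/∂xᵢ` of a vector field `δ ∈ Θ ≅ 𝒪ₙⁿ` on `g ∈ 𝒪ₙ`. -/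
def applyVF (δ : Fin n → On n) (g : On n) : On n := ∑ i, δ i * pd i g

lemma applyVF_add (a b : Fin n → On n) (g : On n) :
    applyVF (a + b) g = applyVF a g + applyVF b g := by
  simp [applyVF, add_mul, Finset.sum_add_distrib]

lemma applyVF_smul (c : On n) (a : Fin n → On n) (g : On n) :
    applyVF (c • a) g = c * applyVF a g := by
  simp [applyVF, Finset.mul_sum, smul_eq_mul, mul_assoc]

/-- For fixed `f`, the map `δ ↦ δ(f)` as an `𝒪ₙ`-linear map `Θ → 𝒪ₙ`. -/
def gradMap (n : ℕ) (f : On n) : (Fin n → On n) →ₗ[On n] On n where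
  toFun δ := applyVF δ f
  map_add' a b := applyVF_add a b f
  map_smul' c a := applyVF_smul c a f

/-- The module `Θ_X` of logarithmic vector fields of `X`, i.e. vector fields
preserving the ideal `I_X`. -/
def ThetaX (n : ℕ) (X : Set (Fin n → ℂ)) : Submodule (On n) (Fin n → On n) where
  carrier := {δ | ∀ g ∈ IX n X, applyVF δ g ∈ IX n X}
  add_mem' := by
    intro a b ha hb g hg
    rw [applyVF_add]
    exact Ideal.add_mem _ (ha g hg) (hb g hg)
  zero_mem' := by
    intro g hg
    have h0 : applyVF (0 : Fin n → On n) g = 0 := by simp [applyVF]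
    rw [h0]; exact Ideal.zero_mem _
  smul_mem' := by
    intro c a ha g hg
    rw [applyVF_smul]
    exact Ideal.mul_mem_left _ _ (ha g hg)

/-- The module `Θ_Y` of vector fields tangent to the hypersurface `Y = f⁻¹(0)`,
i.e. `δ(f) ∈ ⟨f⟩`. -/
def ThetaF (n : ℕ) (f : On n) : Submodule (On n) (Fin n → On n) :=
  Submodule.comap (gradMap n f) (Ideal.span {f})

/-- The module `H_Y` of Hamiltonian vector fields of `f`, i.e. `δ(f) = 0`. -/
def HamF (n : ℕ) (f : On n) : Submodule (On n) (Fin n → On n) :=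
  LinearMap.ker (gradMap n f)

/-- The Bruce–Roberts ideal `df(Θ_X) ⊆ 𝒪ₙ`. -/
def BRIdeal (n : ℕ) (X : Set (Fin n → ℂ)) (f : On n) : Ideal (On n) :=
  Submodule.map (gradMap n f) (ThetaX n X)

/-- The Jacobian ideal `J(f) = ⟨∂f/∂x₁, …, ∂f/∂xₙ⟩`. -/
def Jac (n : ℕ) (f : On n) : Ideal (On n) :=
  Ideal.span (Set.range fun i => pd i f)

/-- The ideal `J(f,h)` generated by the `2×2` minors of the Jacobian matrix of `(f,h)`. -/
def Jmin (n : ℕ) (f h : On n) : Ideal (On n) :=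
  Ideal.span (Set.range fun p : Fin n × Fin n => pd p.1 f * pd p.2 h - pd p.2 f * pd p.1 h)

/-- The Milnor number `μ(f)`. -/
def mu (n : ℕ) (f : On n) : ℕ := Module.finrank ℂ (On n ⧸ Jac n f)

/-- The Tjurina number `τ(f)`. -/
def tau (n : ℕ) (f : On n) : ℕ :=
  Module.finrank ℂ (On n ⧸ (Jac n f + Ideal.span {f}))

/-- The Bruce–Roberts Milnor number `μ_X(f)`. -/
def muX (n : ℕ) (X : Set (Fin n → ℂ)) (f : On n) : ℕ :=
  Module.finrank ℂ (On n ⧸ BRIdeal n X f)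

/-- The Bruce–Roberts Tjurina number `τ_X(f)`. -/
def tauX (n : ℕ) (X : Set (Fin n → ℂ)) (f : On n) : ℕ :=
  Module.finrank ℂ (On n ⧸ (BRIdeal n X f + Ideal.span {f}))

/-- The value at the origin of a germ in `𝒪ₙ`. -/
def ev0 (g : On n) : ℂ := On.rep g 0

/-- The linear part `j¹δ` of a vector field `δ`, as the matrix `(∂δⱼ/∂xᵢ)(0)`. -/
def linPart (δ : Fin n → On n) : Matrix (Fin n) (Fin n) ℂ :=
  Matrix.of fun i j => ev0 (pd i (δ j))

/-- The eigenvalues (with multiplicities) of the linear part of `δ` are given by `w`. -/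
def EigsEq (δ : Fin n → On n) (w : Fin n → ℚ) : Prop :=
  (linPart δ).charpoly = ∏ i, (Polynomial.X - Polynomial.C ((w i : ℂ)))

/-- The germ at `0` of the coordinate function `xᵢ`. -/
def coordG (i : Fin n) : On n :=
  mkOn (fun x : Fin n → ℂ => x i)
    ((ContinuousLinearMap.proj (R := ℂ) (φ := fun _ : Fin n => ℂ) i).analyticAt _)

/-- `g` is quasihomogeneous of degree `d` with respect to the weights `w` (in the given
coordinates): the Euler identity `Σ wᵢ xᵢ ∂g/∂xᵢ = d g` holds. -/
def IsQH (n : ℕ) (w : Fin n → ℚ) (d : ℚ) (g : On n) : Prop :=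
  ∑ i, (w i : ℂ) • (coordG i * pd i g) = (d : ℂ) • g

/-- A germ of a biholomorphic change of coordinates at `0 ∈ ℂⁿ`. -/
structure CoordChange (n : ℕ) where
  toFun : (Fin n → ℂ) → (Fin n → ℂ)
  invFun : (Fin n → ℂ) → (Fin n → ℂ)
  analyticAt : AnalyticAt ℂ toFun 0
  inv_analyticAt : AnalyticAt ℂ invFun 0
  map_zero : toFun 0 = 0
  inv_map_zero : invFun 0 = 0
  left_inv : ∀ᶠ x in 𝓝 (0 : Fin n → ℂ), invFun (toFun x) = x
  right_inv : ∀ᶠ x in 𝓝 (0 : Fin n → ℂ), toFun (invFun x) = x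

lemma CoordChange.tendsto (φ : CoordChange n) :
    Filter.Tendsto φ.toFun (𝓝 (0 : Fin n → ℂ)) (𝓝 (0 : Fin n → ℂ)) := by
  have h := φ.analyticAt.continuousAt
  rwa [ContinuousAt, φ.map_zero] at h

/-- The pullback (composition) of a germ `g ∈ 𝒪ₙ` under a change of coordinates. -/
def pullback (φ : CoordChange n) (g : On n) : On n :=
  ⟨(g : Filter.Germ (𝓝 (0 : Fin n → ℂ)) ℂ).compTendsto φ.toFun φ.tendsto, by
    refine ⟨On.rep g ∘ φ.toFun, ?_, ?_⟩
    · have h := On.rep_analyticAt g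
      rw [← φ.map_zero] at h
      exact h.comp φ.analyticAt
    · rw [← On.rep_spec g]
      exact (Filter.Germ.coe_compTendsto _ φ.tendsto).symm⟩

/-- Definition 1.1: the pair `(f, X)` is relatively quasihomogeneous with respect to the
weights `w`: in suitable coordinates, `f` is quasihomogeneous of degree `1` and `I_X` admits
a system of quasihomogeneous generators of positive degrees, all with respect to `w`. -/
def RelQH (n : ℕ) (X : Set (Fin n → ℂ)) (f : On n) (w : Fin n → ℚ) : Prop :=
  ∃ φ : CoordChange n,
    IsQH n w 1 (pullback φ f) ∧
    ∃ (m : ℕ) (h : Fin m → On n) (d : Fin m → ℚ),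
      Ideal.span (Set.range h) = IX n X ∧ (∀ j, 0 < d j) ∧
      ∀ j, IsQH n w (d j) (pullback φ (h j))

/-- The variety `X` is quasihomogeneous with respect to the weights `w`: in suitable
coordinates, `I_X` admits a system of quasihomogeneous generators of positive degrees. -/
def VarQH (n : ℕ) (X : Set (Fin n → ℂ)) (w : Fin n → ℚ) : Prop :=
  ∃ φ : CoordChange n,
    ∃ (m : ℕ) (h : Fin m → On n) (d : Fin m → ℚ),
      Ideal.span (Set.range h) = IX n X ∧ (∀ j, 0 < d j) ∧
      ∀ j, IsQH n w (d j) (pullback φ (h j))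

instance (f : On n) : HasQuotient (↥(ThetaF n f)) (Submodule ↥(On n) ↥(ThetaF n f)) :=
  Submodule.hasQuotient (R := ↥(On n)) (M := ↥(ThetaF n f))


lemma height_idealOfVars_ge (n : ℕ) :
    (n : ℕ∞) ≤ (MvPolynomial.idealOfVars (Fin n) ℂ).height := by
  classical
  let φ : ℕ → (MvPolynomial (Fin n) ℂ →ₐ[ℂ] MvPolynomial (Fin n) ℂ) := fun k =>
    MvPolynomial.aeval (fun i => if (i : ℕ) < k then 0 else MvPolynomial.X i)
  let P : ℕ → Ideal (MvPolynomial (Fin n) ℂ) := fun k => RingHom.ker (φ k)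
  have hP : ∀ k, (P k).IsPrime := fun k => RingHom.ker_isPrime _
  have hcomp : ∀ k p, φ (k+1) (φ k p) = φ (k+1) p := by
    intro k p
    have : (φ (k+1)).comp (φ k) = φ (k+1) := by
      apply MvPolynomial.algHom_ext
      intro i
      by_cases h : (i : ℕ) < k
      · have : (i : ℕ) < k + 1 := by omega
        have h3 : ¬ (k < (i : ℕ)) := by omega
        simp [φ, h, h3]
      · simp [φ, h]
    exact DFunLike.congr_fun this p
  have hk : ∀ k, k ≤ n → (k : ℕ∞) ≤ (P k).height := by
    intro k
    induction k with
    | zero => intro _; simp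
    | succ k ih =>
      intro hkn
      have h1 := ih (by omega)
      have hlt : P k < P (k+1) := by
        refine lt_of_le_of_ne ?_ ?_
        · intro p hp
          have hp' : φ k p = 0 := hp
          show φ (k+1) p = 0
          rw [← hcomp, hp', map_zero]
        · intro he
          have hm : (MvPolynomial.X ⟨k, hkn⟩ : MvPolynomial (Fin n) ℂ) ∈ P (k+1) := by
            show φ (k+1) _ = 0
            simp [φ]
          rw [← he] at hm
          have hm' : φ k (MvPolynomial.X ⟨k, hkn⟩) = 0 := hm
          simp [φ] at hm'
      have := hP k
      have := hP (k+1)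
      have h2 := Ideal.height_add_one_le_of_lt_of_isPrime hlt
      push_cast
      exact le_trans (by gcongr) h2
  refine (hk n le_rfl).trans (Ideal.height_mono ?_)
  intro p hp
  have hp' : φ n p = 0 := hp
  have h0 : MvPolynomial.constantCoeff (φ n p) = MvPolynomial.constantCoeff p := by
    have : (MvPolynomial.constantCoeff).comp (φ n).toRingHom
        = MvPolynomial.constantCoeff := by
      apply MvPolynomial.ringHom_ext
      · intro r; simp [φ]
      · intro i; simp [φ]
    exact DFunLike.congr_fun this p
  rw [hp', map_zero] at h0
  rw [← pow_one (MvPolynomial.idealOfVars (Fin n) ℂ), MvPolynomial.mem_pow_idealOfVars_iff']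
  intro x hx
  have : x = 0 := by
    rw [← Finsupp.degree_eq_zero_iff]; omega
  rw [this]; exact h0.symm

lemma isMaximal_idealOfVars (n : ℕ) : (MvPolynomial.idealOfVars (Fin n) ℂ).IsMaximal := by
  have : MvPolynomial.idealOfVars (Fin n) ℂ
      = RingHom.ker (MvPolynomial.constantCoeff : MvPolynomial (Fin n) ℂ →+* ℂ) := by
    ext p
    rw [← pow_one (MvPolynomial.idealOfVars (Fin n) ℂ), MvPolynomial.mem_pow_idealOfVars_iff',
      RingHom.mem_ker]
    constructor
    · intro h; exact h 0 (by simp)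
    · intro h x hx
      have : x = 0 := by
        rw [← Finsupp.degree_eq_zero_iff]; omega
      rw [this]; exact h
  rw [this]
  exact RingHom.ker_isMaximal_of_surjective _ (fun c => ⟨MvPolynomial.C c, by simp⟩)

lemma mem_minimalPrimes_of_pow_le {R : Type*} [CommRing R] [IsNoetherianRing R]
    (M : Ideal R) [M.IsMaximal] (I : Ideal R) (hI : I ≤ M) (N : ℕ)
    (h : M ^ N ≤ I ⊔ M ^ (N+1)) : M ∈ I.minimalPrimes := by
  obtain ⟨r, hr, hr2⟩ := Submodule.exists_sub_one_mem_and_smul_le_of_fg_of_le_sup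
    (I := M) (N := I) (N' := M ^ N) (P := M ^ N) (IsNoetherian.noetherian _) le_rfl
    (by rw [smul_eq_mul, ← pow_succ']; exact h)
  refine ⟨⟨inferInstance, hI⟩, ?_⟩
  rintro Q ⟨hQ, hIQ⟩ hQM
  have hrQ : r ∉ Q := by
    intro hrQ
    have h1 := M.sub_mem (hQM hrQ) hr
    simp only [sub_sub_cancel] at h1
    exact Ideal.IsPrime.ne_top' ((Ideal.eq_top_iff_one _).2 h1)
  intro x hx
  have h1 : r * x ^ N ∈ Q := hIQ (hr2 (Submodule.smul_mem_pointwise_smul _ _ _ (Ideal.pow_mem_pow hx N)))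
  exact hQ.mem_of_pow_mem N ((hQ.mem_or_mem h1).resolve_left hrQ)

/-- Two-row determinantal height bound, with additional generators. -/
lemma det_height_le {R : Type*} [CommRing R] [IsNoetherianRing R] {ι : Type*}
    [DecidableEq ι] (J : Finset ι) (a b : ι → R) (cs : Finset R)
    (M : Ideal R) [M.IsMaximal] (ha : ∀ j ∈ J, a j ∈ M) (hb : ∀ j ∈ J, b j ∈ M)
    (hc : ∀ c ∈ cs, c ∈ M) (hJ : J.Nonempty)
    (hM : M ∈ (Ideal.span ({x | ∃ j ∈ J, ∃ k ∈ J, x = a j * b k - a k * b j} ∪ (cs : Set R))).minimalPrimes) :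
    M.height ≤ (((J.card - 1) + cs.card : ℕ) : ℕ∞) := by
  classical
  obtain ⟨o, ho⟩ := hJ
  let t : R[X] := C (a o) + X
  let m : ι → R[X] := fun j => t * C (b j) - C (a j) * C (b o)
  let S : Finset R[X] := (J.erase o).image m ∪ cs.image C
  let Q : Ideal R[X] := M.map C
  have hQp : Q.IsPrime := Ideal.isPrime_map_C_of_isPrime
  have hCQ : ∀ x, C x ∈ Q ↔ x ∈ M := by
    intro x
    constructor
    · intro h
      have := (Ideal.mem_map_C_iff.1 h) 0
      simpa using this
    · exact fun h => Ideal.mem_map_of_mem _ h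
  have htQ : t ∉ Q := by
    intro h
    have := (Ideal.mem_map_C_iff.1 h) 1
    simp [t] at this
    exact Ideal.IsPrime.ne_top' ((Ideal.eq_top_iff_one _).2 this)
  have hSQ : Ideal.span (S : Set R[X]) ≤ Q := by
    rw [Ideal.span_le]
    intro x hx
    simp only [S, Finset.coe_union, Finset.coe_image, Set.mem_union, Set.mem_image] at hx
    rcases hx with ⟨j, hj, rfl⟩ | ⟨c, hc', rfl⟩
    · have hj' : j ∈ J := (Finset.mem_erase.1 (Finset.mem_coe.1 hj)).2
      exact Q.sub_mem (Q.mul_mem_left _ ((hCQ _).2 (hb j hj'))) (Q.mul_mem_right _ ((hCQ _).2 (ha j hj')))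
    · exact (hCQ _).2 (hc c hc')
  have hmin : Q ∈ (Ideal.span (S : Set R[X])).minimalPrimes := by
    refine ⟨⟨hQp, hSQ⟩, ?_⟩
    rintro P ⟨hP, hSP⟩ hPQ
    by_contra hQP
    have hPltQ : P < Q := lt_of_le_not_ge hPQ hQP
    have htP : t ∉ P := fun h => htQ (hPQ h)
    have hmP : ∀ j ∈ J, j ≠ o → m j ∈ P := by
      intro j hj hjo
      exact hSP (Ideal.subset_span (by
          simp only [S, Finset.coe_union, Finset.coe_image]
          exact Or.inl ⟨j, by simp [hj, hjo], rfl⟩))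
    have hXm : ∀ j ∈ J, C (a o * b j - a j * b o) ∈ P ⊔ Ideal.span {X} := by
      intro j hj
      by_cases hjo : j = o
      · subst hjo; simp
      · have : C (a o * b j - a j * b o) = m j - X * C (b j) := by
          simp only [m, t, C_mul, C_sub]; ring
        rw [this]
        exact Ideal.sub_mem _ (Ideal.mem_sup_left (hmP j hj hjo))
          (Ideal.mem_sup_right (Ideal.mul_mem_right _ _ (Ideal.mem_span_singleton_self _)))
    have hI : ∀ x ∈ Ideal.span ({x | ∃ j ∈ J, ∃ k ∈ J, x = a j * b k - a k * b j} ∪ (cs : Set R)),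
        C x ∈ P ⊔ Ideal.span {X} := by
      intro x hx
      have : Ideal.span ({x | ∃ j ∈ J, ∃ k ∈ J, x = a j * b k - a k * b j} ∪ (cs : Set R)) ≤
          (P ⊔ Ideal.span {X}).comap C := by
        rw [Ideal.span_le]
        rintro x (⟨j, hj, k, hk, rfl⟩ | hx)
        · show C (a j * b k - a k * b j) ∈ P ⊔ Ideal.span {X}
          by_cases hjo : j = o
          · subst hjo; exact hXm k hk
          by_cases hko : k = o
          · subst hko
            have := (P ⊔ Ideal.span {X}).neg_mem (hXm j hj)
            rw [← C_neg] at this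
            convert this using 2
            ring
          · have h1 : t * C (a j * b k - a k * b j) ∈ P := by
              have : t * C (a j * b k - a k * b j) = C (a j) * m k - C (a k) * m j := by
                simp only [m, C_mul, C_sub]; ring
              rw [this]
              exact P.sub_mem (P.mul_mem_left _ (hmP k hk hko)) (P.mul_mem_left _ (hmP j hj hjo))
            exact Ideal.mem_sup_left ((hP.mem_or_mem h1).resolve_left htP)
        · exact Ideal.mem_sup_left (hSP (Ideal.subset_span (by
            simp only [S, Finset.coe_union, Finset.coe_image]
            exact Or.inr ⟨x, hx, rfl⟩)))
      exact this hx
    let MM : Ideal R[X] := M.comap (evalRingHom 0)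
    have hMMp : MM.IsPrime := Ideal.IsPrime.comap _
    have hQMM : Q ≤ MM := by
      rw [Ideal.map_le_iff_le_comap]
      intro x hx
      show eval 0 (C x) ∈ M
      simpa using hx
    have hXMM : X ∈ MM := by
      show eval 0 X ∈ M
      simp
    have hXQ : X ∉ Q := by
      intro h
      have := (Ideal.mem_map_C_iff.1 h) 1
      simp at this
      exact Ideal.IsPrime.ne_top' ((Ideal.eq_top_iff_one _).2 this)
    have hQltMM : Q < MM := lt_of_le_not_ge hQMM (fun h => hXQ (h hXMM))
    have hMMmin : MM ∈ (P ⊔ Ideal.span {X}).minimalPrimes := by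
      refine ⟨⟨hMMp, sup_le (hPQ.trans hQMM) ?_⟩, ?_⟩
      · rw [Ideal.span_singleton_le_iff_mem]; exact hXMM
      · rintro P' ⟨hP', hle⟩ hP'MM
        have hX' : X ∈ P' := hle (Ideal.mem_sup_right (Ideal.mem_span_singleton_self _))
        have hM' : M ≤ P'.comap C := by
          refine hM.2 ⟨Ideal.IsPrime.comap _, fun x hx => hle (hI x hx)⟩ ?_
          intro x hx
          have : eval 0 (C x) ∈ M := hP'MM hx
          simpa using this
        intro p hp
        have hp' : eval 0 p ∈ M := hp
        have h1 : C (eval 0 p) ∈ P' := hM' hp'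
        have h2 : X ∣ p - C (eval 0 p) := by
          rw [X_dvd_iff]; simp [coeff_zero_eq_eval_zero]
        obtain ⟨q, hq⟩ := h2
        have : p = C (eval 0 p) + X * q := by rw [← hq]; ring
        rw [this]
        exact P'.add_mem h1 (P'.mul_mem_right _ hX')
    have hle1 := Ideal.map_height_le_one_of_mem_minimalPrimes hMMmin
    have p1 : (Q.map (Ideal.Quotient.mk P)).IsPrime := Ideal.isPrime_map_quotientMk_of_isPrime hPQ
    have p2 : (MM.map (Ideal.Quotient.mk P)).IsPrime :=
      Ideal.isPrime_map_quotientMk_of_isPrime (hPQ.trans hQMM)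
    have l1 : (⊥ : Ideal (R[X] ⧸ P)) < Q.map (Ideal.Quotient.mk P) := by
      refine lt_of_le_not_ge bot_le ?_
      intro h
      refine hQP ?_
      intro x hx
      have := h (Ideal.mem_map_of_mem _ hx)
      exact Ideal.Quotient.eq_zero_iff_mem.1 this
    have l2 : Q.map (Ideal.Quotient.mk P) < MM.map (Ideal.Quotient.mk P) := by
      refine lt_of_le_not_ge (Ideal.map_mono hQMM) ?_
      intro h
      have h3 := Ideal.comap_mono (f := Ideal.Quotient.mk P) h
      rw [Ideal.comap_map_mk hPQ, Ideal.comap_map_mk (hPQ.trans hQMM)] at h3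
      exact hXQ (h3 hXMM)
    have : (⊥ : Ideal (R[X] ⧸ P)).IsPrime := Ideal.isPrime_bot
    have e1 := Ideal.height_add_one_le_of_lt_of_isPrime l1
    have e2 := Ideal.height_add_one_le_of_lt_of_isPrime l2
    have : (2 : ℕ∞) ≤ 1 := by
      calc (2 : ℕ∞) = 0 + 1 + 1 := by norm_num
        _ ≤ (⊥ : Ideal (R[X] ⧸ P)).height + 1 + 1 := by gcongr; exact bot_le
        _ ≤ _ := by gcongr
        _ ≤ _ := e2
        _ ≤ 1 := hle1
    norm_num at this
  have h1 := Ideal.height_le_card_of_mem_minimalPrimes_span_finset hmin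
  rw [Polynomial.height_map_C] at h1
  refine h1.trans ?_
  norm_cast
  refine (Finset.card_union_le _ _).trans ?_
  refine add_le_add (Finset.card_image_le.trans ?_) Finset.card_image_le
  rw [Finset.card_erase_of_mem ho]

lemma card_le_of_single {n : ℕ} (S T : Finset (Fin n)) (g : Fin n → MvPolynomial (Fin n) ℂ)
    (hg : ∀ j, g j ∈ MvPolynomial.idealOfVars (Fin n) ℂ)
    (hT : ∀ j ∉ T, g j ∈ Ideal.span (MvPolynomial.X '' ((Sᶜ : Finset (Fin n)) : Set (Fin n))))
    (N : ℕ) (I : Ideal (MvPolynomial (Fin n) ℂ))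
    (hI : I ≤ Ideal.span (Set.range g) ⊔
      Ideal.span (MvPolynomial.X '' ((Sᶜ : Finset (Fin n)) : Set (Fin n))))
    (h : MvPolynomial.idealOfVars (Fin n) ℂ ^ N ≤ I ⊔ MvPolynomial.idealOfVars (Fin n) ℂ ^ (N+1)) :
    S.card ≤ T.card := by
  classical
  have hmax := isMaximal_idealOfVars n
  let E : Finset (MvPolynomial (Fin n) ℂ) := T.image g ∪ Sᶜ.image MvPolynomial.X
  have hIE : I ≤ Ideal.span (E : Set (MvPolynomial (Fin n) ℂ)) := by
    have hX : Ideal.span (MvPolynomial.X '' ((Sᶜ : Finset (Fin n)) : Set (Fin n))) ≤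
        Ideal.span (E : Set (MvPolynomial (Fin n) ℂ)) := by
      apply Ideal.span_mono
      simp [E]
    refine hI.trans (sup_le ?_ hX)
    rw [Ideal.span_le]
    rintro _ ⟨j, rfl⟩
    by_cases hj : j ∈ T
    · apply Ideal.subset_span
      simp only [E, Finset.coe_union, Finset.coe_image]
      exact Or.inl ⟨j, hj, rfl⟩
    · exact hX (hT j hj)
  have hE : Ideal.span (E : Set (MvPolynomial (Fin n) ℂ)) ≤ MvPolynomial.idealOfVars (Fin n) ℂ := by
    rw [Ideal.span_le]
    intro x hx
    simp only [E, Finset.coe_union, Finset.coe_image] at hx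
    rcases hx with ⟨j, _, rfl⟩ | ⟨j, _, rfl⟩
    · exact hg j
    · exact Ideal.subset_span ⟨j, rfl⟩
  have hmin := mem_minimalPrimes_of_pow_le (MvPolynomial.idealOfVars (Fin n) ℂ) _ hE N
    (h.trans (sup_le_sup_right hIE _))
  have h1 := (height_idealOfVars_ge n).trans
    (Ideal.height_le_card_of_mem_minimalPrimes_span_finset hmin)
  norm_cast at h1
  have h2 : E.card ≤ T.card + Sᶜ.card :=
    (Finset.card_union_le _ _).trans (add_le_add Finset.card_image_le Finset.card_image_le)
  have h3 := S.card_compl_add_card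
  rw [Fintype.card_fin] at h3
  omega

lemma card_lt_of_det {n : ℕ} (S T : Finset (Fin n)) (hTne : T.Nonempty)
    (a b : Fin n → MvPolynomial (Fin n) ℂ)
    (ha : ∀ j, a j ∈ MvPolynomial.idealOfVars (Fin n) ℂ)
    (hb : ∀ j, b j ∈ MvPolynomial.idealOfVars (Fin n) ℂ)
    (haT : ∀ j ∉ T, a j ∈ Ideal.span (MvPolynomial.X '' ((Sᶜ : Finset (Fin n)) : Set (Fin n))))
    (hbT : ∀ j ∉ T, b j ∈ Ideal.span (MvPolynomial.X '' ((Sᶜ : Finset (Fin n)) : Set (Fin n))))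
    (N : ℕ) (I : Ideal (MvPolynomial (Fin n) ℂ))
    (hI : I ≤ Ideal.span (Set.range fun p : Fin n × Fin n => a p.1 * b p.2 - a p.2 * b p.1) ⊔
      Ideal.span (MvPolynomial.X '' ((Sᶜ : Finset (Fin n)) : Set (Fin n))))
    (h : MvPolynomial.idealOfVars (Fin n) ℂ ^ N ≤ I ⊔ MvPolynomial.idealOfVars (Fin n) ℂ ^ (N+1)) :
    S.card < T.card := by
  classical
  have hmax := isMaximal_idealOfVars n
  let cs : Finset (MvPolynomial (Fin n) ℂ) := Sᶜ.image MvPolynomial.X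
  let E : Set (MvPolynomial (Fin n) ℂ) :=
    {x | ∃ j ∈ T, ∃ k ∈ T, x = a j * b k - a k * b j} ∪ (cs : Set (MvPolynomial (Fin n) ℂ))
  have hcs : ∀ c ∈ cs, c ∈ MvPolynomial.idealOfVars (Fin n) ℂ := by
    intro c hc
    obtain ⟨j, _, rfl⟩ := Finset.mem_image.1 hc
    exact Ideal.subset_span ⟨j, rfl⟩
  have hIE : I ≤ Ideal.span E := by
    have hX : Ideal.span (MvPolynomial.X '' ((Sᶜ : Finset (Fin n)) : Set (Fin n))) ≤
        Ideal.span E := by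
      apply Ideal.span_mono
      simp [E, cs]
    refine hI.trans (sup_le ?_ hX)
    rw [Ideal.span_le]
    rintro _ ⟨⟨j, k⟩, rfl⟩
    by_cases hj : j ∈ T
    · by_cases hk : k ∈ T
      · exact Ideal.subset_span (Or.inl ⟨j, hj, k, hk, rfl⟩)
      · exact hX (Ideal.sub_mem _ (Ideal.mul_mem_left _ _ (hbT k hk))
          (Ideal.mul_mem_right _ _ (haT k hk)))
    · exact hX (Ideal.sub_mem _ (Ideal.mul_mem_right _ _ (haT j hj))
          (Ideal.mul_mem_left _ _ (hbT j hj)))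
  have hE : Ideal.span E ≤ MvPolynomial.idealOfVars (Fin n) ℂ := by
    rw [Ideal.span_le]
    rintro x (⟨j, _, k, _, rfl⟩ | hx)
    · exact Ideal.sub_mem _ (Ideal.mul_mem_right _ _ (ha j)) (Ideal.mul_mem_right _ _ (ha k))
    · exact hcs x hx
  have hmin := mem_minimalPrimes_of_pow_le (MvPolynomial.idealOfVars (Fin n) ℂ) _ hE N
    (h.trans (sup_le_sup_right hIE _))
  have h1 := (height_idealOfVars_ge n).trans
    (det_height_le T a b cs _ (fun j _ => ha j) (fun j _ => hb j) hcs hTne hmin)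
  have h1' : n ≤ (T.card - 1) + cs.card := by exact_mod_cast h1
  have h2 : cs.card ≤ Sᶜ.card := Finset.card_image_le
  have h3 := S.card_compl_add_card
  rw [Fintype.card_fin] at h3
  have := hTne.card_pos
  omega

lemma mem_support_of_pderiv {n : ℕ} {F : MvPolynomial (Fin n) ℂ} {j : Fin n} {m : Fin n →₀ ℕ}
    (hm : m ∈ (MvPolynomial.pderiv j F).support) : m + Finsupp.single j 1 ∈ F.support := by
  rw [MvPolynomial.mem_support_iff, MvPolynomial.coeff_pderiv] at hm
  rw [MvPolynomial.mem_support_iff]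
  intro h
  rw [h] at hm
  simp at hm

/-- all monomials of `F` have weight `d` -/
def WtHom {n : ℕ} (v : Fin n → ℚ) (d : ℚ) (F : MvPolynomial (Fin n) ℂ) : Prop :=
  ∀ a ∈ F.support, ∑ i, (a i : ℚ) * v i = d

lemma WtHom.pderiv_wt {n : ℕ} {v : Fin n → ℚ} {d : ℚ} {F : MvPolynomial (Fin n) ℂ}
    (hF : WtHom v d F) {j : Fin n} {m : Fin n →₀ ℕ}
    (hm : m ∈ (MvPolynomial.pderiv j F).support) : ∑ i, (m i : ℚ) * v i + v j = d := by
  classical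
  have := hF _ (mem_support_of_pderiv hm)
  rw [← this]
  simp [Finsupp.single_apply, add_mul, Finset.sum_add_distrib]

lemma pderiv_mem_of_sq {n : ℕ} {F : MvPolynomial (Fin n) ℂ}
    (hF : F ∈ MvPolynomial.idealOfVars (Fin n) ℂ ^ 2) (j : Fin n) :
    MvPolynomial.pderiv j F ∈ MvPolynomial.idealOfVars (Fin n) ℂ := by
  rw [← pow_one (MvPolynomial.idealOfVars (Fin n) ℂ), MvPolynomial.mem_pow_idealOfVars_iff]
  intro m hm
  have := (MvPolynomial.mem_pow_idealOfVars_iff _ _).1 hF _ (mem_support_of_pderiv hm)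
  rw [map_add, Finsupp.degree_single] at this
  omega

/-- nonpositive restriction -/
lemma sum_nonpos_of {n : ℕ} {v : Fin n → ℚ} (S : Finset (Fin n)) (hS : ∀ i ∈ S, v i ≤ 0)
    (m : Fin n →₀ ℕ) (hm : ∀ i ∈ Sᶜ, m i = 0) : ∑ i, (m i : ℚ) * v i ≤ 0 := by
  apply Finset.sum_nonpos
  intro i _
  by_cases hi : i ∈ S
  · exact mul_nonpos_of_nonneg_of_nonpos (by positivity) (hS i hi)
  · simp [hm i (by simpa using hi)]

lemma sum_ge_of {n : ℕ} {v : Fin n → ℚ} (S : Finset (Fin n)) (e : ℚ) (he : 0 < e)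
    (hS : ∀ i ∈ S, e ≤ v i) (m : Fin n →₀ ℕ) (hm : ∀ i ∈ Sᶜ, m i = 0) (hm0 : 1 ≤ m.degree) :
    e ≤ ∑ i, (m i : ℚ) * v i := by
  have h1 : ∀ i, (m i : ℚ) * e ≤ (m i : ℚ) * v i := by
    intro i
    by_cases hi : i ∈ S
    · exact mul_le_mul_of_nonneg_left (hS i hi) (by positivity)
    · simp [hm i (by simpa using hi)]
  calc e = 1 * e := by ring
    _ ≤ (m.degree : ℚ) * e := by gcongr; exact_mod_cast hm0
    _ = ∑ i, (m i : ℚ) * e := by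
        rw [← Finset.sum_mul, Finsupp.degree_eq_sum]; push_cast; rfl
    _ ≤ _ := Finset.sum_le_sum fun i _ => h1 i

lemma mem_span_compl {n : ℕ} (S : Finset (Fin n)) (P : MvPolynomial (Fin n) ℂ)
    (h : ∀ m ∈ P.support, (∀ i ∈ Sᶜ, m i = 0) → False) :
    P ∈ Ideal.span (MvPolynomial.X '' ((Sᶜ : Finset (Fin n)) : Set (Fin n))) := by
  rw [MvPolynomial.mem_ideal_span_X_image]
  intro m hm
  by_contra hc
  push Not at hc
  exact h m hm (fun i hi => hc i (by exact_mod_cast hi))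

/-- on the nonpositive part -/
lemma pderiv_mem_nonpos {n : ℕ} {v : Fin n → ℚ} {d : ℚ} {F : MvPolynomial (Fin n) ℂ}
    (hF : WtHom v d F) (S : Finset (Fin n)) (hS : ∀ i ∈ S, v i ≤ 0) (j : Fin n) (hj : v j < d) :
    MvPolynomial.pderiv j F ∈
      Ideal.span (MvPolynomial.X '' ((Sᶜ : Finset (Fin n)) : Set (Fin n))) := by
  apply mem_span_compl
  intro m hm h0
  have := hF.pderiv_wt hm
  have := sum_nonpos_of S hS m h0
  linarith

/-- on the part with weights at least `e` -/
lemma pderiv_mem_ge {n : ℕ} {v : Fin n → ℚ} {e : ℚ} (he : 0 < e) {F : MvPolynomial (Fin n) ℂ}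
    (hF : WtHom v e F) (hF2 : F ∈ MvPolynomial.idealOfVars (Fin n) ℂ ^ 2)
    (S : Finset (Fin n)) (hS : ∀ i ∈ S, e ≤ v i) (j : Fin n) (hj : 0 < v j) :
    MvPolynomial.pderiv j F ∈
      Ideal.span (MvPolynomial.X '' ((Sᶜ : Finset (Fin n)) : Set (Fin n))) := by
  apply mem_span_compl
  intro m hm h0
  have h1 := hF.pderiv_wt hm
  have h3 := pderiv_mem_of_sq hF2 j
  rw [← pow_one (MvPolynomial.idealOfVars (Fin n) ℂ), MvPolynomial.mem_pow_idealOfVars_iff] at h3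
  have := sum_ge_of S e he hS m h0 (h3 m hm)
  linarith

lemma wt_mem_nonpos {n : ℕ} {v : Fin n → ℚ} {d : ℚ} (hd : 0 < d) {F : MvPolynomial (Fin n) ℂ}
    (hF : WtHom v d F) (S : Finset (Fin n)) (hS : ∀ i ∈ S, v i ≤ 0) :
    F ∈ Ideal.span (MvPolynomial.X '' ((Sᶜ : Finset (Fin n)) : Set (Fin n))) := by
  apply mem_span_compl
  intro m hm h0
  have := hF _ hm
  have := sum_nonpos_of S hS m h0
  linarith

lemma wt_mem_ge {n : ℕ} {v : Fin n → ℚ} {d e : ℚ} (he : 0 < e) (hde : d < e)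
    {F : MvPolynomial (Fin n) ℂ}
    (hF : WtHom v d F) (hF2 : F ∈ MvPolynomial.idealOfVars (Fin n) ℂ ^ 2)
    (S : Finset (Fin n)) (hS : ∀ i ∈ S, e ≤ v i) :
    F ∈ Ideal.span (MvPolynomial.X '' ((Sᶜ : Finset (Fin n)) : Set (Fin n))) := by
  apply mem_span_compl
  intro m hm h0
  have h1 := hF _ hm
  have h3 := (MvPolynomial.mem_pow_idealOfVars_iff _ _).1 hF2 m hm
  have := sum_ge_of S e he hS m h0 (by omega)
  linarith

lemma card_nonpos_le {n : ℕ} (v : Fin n → ℚ)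
    (F : MvPolynomial (Fin n) ℂ) (N : ℕ) (d : ℚ) (hd : 0 < d) (hF : WtHom v d F)
    (hF2 : F ∈ MvPolynomial.idealOfVars (Fin n) ℂ ^ 2)
    (h1 : MvPolynomial.idealOfVars (Fin n) ℂ ^ N ≤
      (Ideal.span (Set.range fun j => MvPolynomial.pderiv j F) ⊔ Ideal.span {F}) ⊔
        MvPolynomial.idealOfVars (Fin n) ℂ ^ (N+1)) :
    (Finset.univ.filter (fun i => v i ≤ 0)).card ≤ (Finset.univ.filter (fun i => d ≤ v i)).card := by
  refine card_le_of_single _ _ (fun j => MvPolynomial.pderiv j F) (pderiv_mem_of_sq hF2) ?_ N _ ?_ h1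
  · intro j hj
    exact pderiv_mem_nonpos hF _ (by simp) j (by simpa using hj)
  · refine sup_le_sup_left ?_ _
    rw [Ideal.span_singleton_le_iff_mem]
    exact wt_mem_nonpos hd hF _ (by simp)

lemma card_ge_le {n : ℕ} (v : Fin n → ℚ)
    (F : MvPolynomial (Fin n) ℂ) (N : ℕ) (d : ℚ) (hd : 0 < d) (hF : WtHom v d F)
    (hF2 : F ∈ MvPolynomial.idealOfVars (Fin n) ℂ ^ 2)
    (h1 : MvPolynomial.idealOfVars (Fin n) ℂ ^ N ≤
      (Ideal.span (Set.range fun j => MvPolynomial.pderiv j F) ⊔ Ideal.span {F}) ⊔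
        MvPolynomial.idealOfVars (Fin n) ℂ ^ (N+1)) :
    (Finset.univ.filter (fun i => d ≤ v i)).card ≤ (Finset.univ.filter (fun i => v i ≤ 0)).card := by
  refine card_le_of_single _ _ (fun j => MvPolynomial.pderiv j F) (pderiv_mem_of_sq hF2) ?_ N _ ?_ h1
  · intro j hj
    exact pderiv_mem_ge hd hF hF2 _ (by simp) j (by simpa using hj)
  · refine sup_le_sup_left ?_ _
    rw [Ideal.span_singleton_le_iff_mem]
    apply mem_span_compl
    intro m hm h0
    have h1 := hF _ hm
    have h3 := (MvPolynomial.mem_pow_idealOfVars_iff _ _).1 hF2 m hm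
    -- degree at least two
    have h4 : 2 * d ≤ ∑ i, (m i : ℚ) * v i := by
      have h1 : ∀ i, (m i : ℚ) * d ≤ (m i : ℚ) * v i := by
        intro i
        by_cases hi : d ≤ v i
        · exact mul_le_mul_of_nonneg_left hi (by positivity)
        · simp [h0 i (by simpa using hi)]
      calc 2 * d ≤ (m.degree : ℚ) * d := by gcongr; exact_mod_cast h3
        _ = ∑ i, (m i : ℚ) * d := by
            rw [← Finset.sum_mul, Finsupp.degree_eq_sum]; push_cast; rfl
        _ ≤ _ := Finset.sum_le_sum fun i _ => h1 i
    linarith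

theorem poly_contra {n : ℕ} (v : Fin n → ℚ) (hv : ∃ i, v i ≤ 0)
    (F G : MvPolynomial (Fin n) ℂ) (d : ℚ) (N : ℕ)
    (hF : WtHom v 1 F) (hG : WtHom v d G)
    (hF2 : F ∈ MvPolynomial.idealOfVars (Fin n) ℂ ^ 2)
    (hG2 : G ∈ MvPolynomial.idealOfVars (Fin n) ℂ ^ 2)
    (h1 : MvPolynomial.idealOfVars (Fin n) ℂ ^ N ≤
      Ideal.span (Set.range fun j => MvPolynomial.pderiv j F) ⊔
        MvPolynomial.idealOfVars (Fin n) ℂ ^ (N+1))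
    (h2 : MvPolynomial.idealOfVars (Fin n) ℂ ^ N ≤
      (Ideal.span (Set.range fun j => MvPolynomial.pderiv j G) ⊔ Ideal.span {G}) ⊔
        MvPolynomial.idealOfVars (Fin n) ℂ ^ (N+1))
    (h3 : MvPolynomial.idealOfVars (Fin n) ℂ ^ N ≤
      (Ideal.span (Set.range fun p : Fin n × Fin n =>
        MvPolynomial.pderiv p.1 F * MvPolynomial.pderiv p.2 G -
        MvPolynomial.pderiv p.2 F * MvPolynomial.pderiv p.1 G) ⊔ Ideal.span {G}) ⊔
        MvPolynomial.idealOfVars (Fin n) ℂ ^ (N+1)) : False := by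
  classical
  set L := Finset.univ.filter (fun i => v i ≤ 0) with hL
  have hLne : 0 < L.card := by
    obtain ⟨i, hi⟩ := hv
    exact Finset.card_pos.2 ⟨i, by simp [hL, hi]⟩
  have h1' := h1.trans (sup_le_sup_right (le_sup_left (b := Ideal.span {F})) _)
  have c1 := card_nonpos_le v F N 1 one_pos hF hF2 h1'
  change L.card ≤ _ at c1
  rcases le_or_gt d 0 with hd | hd
  · -- `d ≤ 0`
    have := card_lt_of_det (Finset.univ.filter (fun i => 1 ≤ v i)) L (Finset.card_pos.1 hLne)
      (fun j => MvPolynomial.pderiv j F) (fun j => MvPolynomial.pderiv j G)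
      (pderiv_mem_of_sq hF2) (pderiv_mem_of_sq hG2)
      (fun j hj => pderiv_mem_ge one_pos hF hF2 _ (by simp) j (by simpa [hL] using hj))
      (fun j hj => by
        apply mem_span_compl
        intro m hm h0
        have e1 := hG.pderiv_wt hm
        have e3 := pderiv_mem_of_sq hG2 j
        rw [← pow_one (MvPolynomial.idealOfVars (Fin n) ℂ),
          MvPolynomial.mem_pow_idealOfVars_iff] at e3
        have := sum_ge_of (v := v) _ 1 one_pos (by simp) m h0 (e3 m hm)
        have : 0 < v j := by simpa [hL] using hj
        linarith) N _ (sup_le_sup_left (by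
          rw [Ideal.span_singleton_le_iff_mem]
          exact wt_mem_ge one_pos (by linarith) hG hG2 _ (by simp)) _) h3
    omega
  · -- `d > 0`
    obtain ⟨e, he0, he1, hed, hcard, hcard2⟩ : ∃ e : ℚ, 0 < e ∧ e ≤ 1 ∧ e ≤ d ∧
        (Finset.univ.filter (fun i => e ≤ v i)).card ≤ L.card ∧
        L.card ≤ (Finset.univ.filter (fun i => e ≤ v i)).card := by
      rcases le_total d 1 with h | h
      · exact ⟨d, hd, h, le_rfl, card_ge_le v G N d hd hG hG2 h2, card_nonpos_le v G N d hd hG hG2 h2⟩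
      · exact ⟨1, one_pos, le_rfl, h, card_ge_le v F N 1 one_pos hF hF2 h1', c1⟩
    have := card_lt_of_det L (Finset.univ.filter (fun i => e ≤ v i))
      (Finset.card_pos.1 (by omega))
      (fun j => MvPolynomial.pderiv j F) (fun j => MvPolynomial.pderiv j G)
      (pderiv_mem_of_sq hF2) (pderiv_mem_of_sq hG2)
      (fun j hj => pderiv_mem_nonpos hF _ (by simp [hL]) j (by
        have : v j < e := by simpa using hj
        linarith))
      (fun j hj => pderiv_mem_nonpos hG _ (by simp [hL]) j (by
        have : v j < e := by simpa using hj
        linarith)) N _ (sup_le_sup_left (by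
          rw [Ideal.span_singleton_le_iff_mem]
          exact wt_mem_nonpos hd hG _ (by simp [hL])) _) h3
    omega

lemma mkOn_eq_iff {n : ℕ} {f g : (Fin n → ℂ) → ℂ} (hf : AnalyticAt ℂ f 0) (hg : AnalyticAt ℂ g 0) :
    mkOn f hf = mkOn g hg ↔ f =ᶠ[𝓝 0] g := by
  constructor
  · intro h
    exact Filter.Germ.coe_eq.1 (congrArg Subtype.val h)
  · intro h
    exact Subtype.ext (Filter.Germ.coe_eq.2 h)

lemma mkOn_rep {n : ℕ} (g : On n) : mkOn (On.rep g) (On.rep_analyticAt g) = g :=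
  Subtype.ext (On.rep_spec g)

lemma exists_mkOn {n : ℕ} (g : On n) : ∃ f, ∃ hf : AnalyticAt ℂ f 0, g = mkOn f hf :=
  ⟨_, _, (mkOn_rep g).symm⟩

lemma rep_mkOn {n : ℕ} {f : (Fin n → ℂ) → ℂ} (hf : AnalyticAt ℂ f 0) :
    On.rep (mkOn f hf) =ᶠ[𝓝 0] f :=
  (mkOn_eq_iff (On.rep_analyticAt _) hf).1 (mkOn_rep _)

lemma ev0_mkOn {n : ℕ} {f : (Fin n → ℂ) → ℂ} (hf : AnalyticAt ℂ f 0) :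
    ev0 (mkOn f hf) = f 0 := (rep_mkOn hf).eq_of_nhds

lemma pd_analytic {n : ℕ} (i : Fin n) {f : (Fin n → ℂ) → ℂ} (hf : AnalyticAt ℂ f 0) :
    AnalyticAt ℂ (fun x => fderiv ℂ f x (Pi.single i 1)) 0 := by
  have h := ((ContinuousLinearMap.apply ℂ ℂ (Pi.single i 1)).analyticAt (fderiv ℂ f 0)).comp
    hf.fderiv
  exact h

lemma pd_mkOn {n : ℕ} (i : Fin n) {f : (Fin n → ℂ) → ℂ} (hf : AnalyticAt ℂ f 0) :
    pd i (mkOn f hf) = mkOn (fun x => fderiv ℂ f x (Pi.single i 1)) (pd_analytic i hf) := by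
  refine (mkOn_eq_iff _ _).2 ?_
  filter_upwards [(rep_mkOn hf).fderiv (𝕜 := ℂ)] with x hx
  rw [hx]

lemma mkOn_add {n : ℕ} {f g : (Fin n → ℂ) → ℂ} (hf : AnalyticAt ℂ f 0) (hg : AnalyticAt ℂ g 0) :
    mkOn f hf + mkOn g hg = mkOn (fun x => f x + g x) (hf.add hg) := rfl

lemma mkOn_mul {n : ℕ} {f g : (Fin n → ℂ) → ℂ} (hf : AnalyticAt ℂ f 0) (hg : AnalyticAt ℂ g 0) :
    mkOn f hf * mkOn g hg = mkOn (fun x => f x * g x) (hf.mul hg) := rfl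

lemma mkOn_smul {n : ℕ} (c : ℂ) {f : (Fin n → ℂ) → ℂ} (hf : AnalyticAt ℂ f 0) :
    c • mkOn f hf = mkOn (fun x => c * f x) (analyticAt_const.mul hf) := rfl

lemma algebraMap_mkOn {n : ℕ} (c : ℂ) :
    algebraMap ℂ (On n) c = mkOn (fun _ => c) analyticAt_const := rfl

lemma one_mkOn {n : ℕ} : (1 : On n) = mkOn (fun _ => 1) analyticAt_const := rfl
lemma zero_mkOn {n : ℕ} : (0 : On n) = mkOn (fun _ => 0) analyticAt_const := rfl

/-- Evaluation at the origin as an algebra homomorphism. -/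
def ev0H (n : ℕ) : On n →ₐ[ℂ] ℂ where
  toFun := ev0
  map_one' := by rw [one_mkOn, ev0_mkOn]
  map_zero' := by rw [zero_mkOn, ev0_mkOn]
  map_mul' a b := by
    obtain ⟨f, hf, rfl⟩ := exists_mkOn a
    obtain ⟨g, hg, rfl⟩ := exists_mkOn b
    rw [mkOn_mul, ev0_mkOn, ev0_mkOn, ev0_mkOn]
  map_add' a b := by
    obtain ⟨f, hf, rfl⟩ := exists_mkOn a
    obtain ⟨g, hg, rfl⟩ := exists_mkOn b
    rw [mkOn_add, ev0_mkOn, ev0_mkOn, ev0_mkOn]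
  commutes' c := by rw [algebraMap_mkOn, ev0_mkOn]; rfl

@[simp] lemma ev0H_apply {n : ℕ} (g : On n) : ev0H n g = ev0 g := rfl

lemma mem_mId {n : ℕ} (g : On n) : g ∈ mId n ↔ ev0 g = 0 := by
  obtain ⟨f, hf, rfl⟩ := exists_mkOn g
  rw [ev0_mkOn, mId, RingHom.mem_ker]
  have : restrictOn n (pure_le_nhds (0 : Fin n → ℂ)) (mkOn f hf) =
    ((f : (Fin n → ℂ) → ℂ) : Filter.Germ (pure (0 : Fin n → ℂ)) ℂ) := rfl
  rw [this]
  have h0 : (0 : Filter.Germ (pure (0 : Fin n → ℂ)) ℂ) = ((fun _ => 0 : (Fin n → ℂ) → ℂ) :  Filter.Germ (pure (0 : Fin n → ℂ)) ℂ) := rfl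
  rw [h0, Filter.Germ.coe_eq]
  simp [Filter.EventuallyEq]

lemma mem_IX {n : ℕ} (X : Set (Fin n → ℂ)) {f : (Fin n → ℂ) → ℂ} (hf : AnalyticAt ℂ f 0) :
    mkOn f hf ∈ IX n X ↔ ∀ᶠ x in 𝓝 0, x ∈ X → f x = 0 := by
  rw [IX, RingHom.mem_ker]
  have : restrictOn n (nhdsWithin_le_nhds (s := X)) (mkOn f hf) =
    ((f : (Fin n → ℂ) → ℂ) : Filter.Germ (𝓝[X] (0 : Fin n → ℂ)) ℂ) := rfl
  rw [this]
  have h0 : (0 : Filter.Germ (𝓝[X] (0 : Fin n → ℂ)) ℂ) = ((fun _ => 0 : (Fin n → ℂ) → ℂ) :  Filter.Germ (𝓝[X] (0 : Fin n → ℂ)) ℂ) := rfl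
  rw [h0, Filter.Germ.coe_eq, Filter.EventuallyEq, eventually_nhdsWithin_iff]

/-- Partial derivatives as derivations. -/
def pdD {n : ℕ} (i : Fin n) : Derivation ℂ (On n) (On n) :=
  Derivation.mk'
    { toFun := pd i
      map_add' := by
        intro a b
        obtain ⟨f, hf, rfl⟩ := exists_mkOn a
        obtain ⟨g, hg, rfl⟩ := exists_mkOn b
        rw [mkOn_add, pd_mkOn, pd_mkOn, pd_mkOn, mkOn_add, mkOn_eq_iff]
        filter_upwards [hf.eventually_analyticAt, hg.eventually_analyticAt] with x h1 h2
        have := (h1.differentiableAt.hasFDerivAt.add h2.differentiableAt.hasFDerivAt).fderiv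
        change fderiv ℂ (f + g) x _ = _
        rw [this]; rfl
      map_smul' := by
        intro c a
        obtain ⟨f, hf, rfl⟩ := exists_mkOn a
        rw [mkOn_smul, pd_mkOn, pd_mkOn, RingHom.id_apply, mkOn_smul, mkOn_eq_iff]
        filter_upwards [hf.eventually_analyticAt] with x h1
        have := (h1.differentiableAt.hasFDerivAt.const_mul c).fderiv
        rw [this]; rfl }
    (by
      intro a b
      obtain ⟨f, hf, rfl⟩ := exists_mkOn a
      obtain ⟨g, hg, rfl⟩ := exists_mkOn b
      change pd i _ = _ * pd i _ + _ * pd i _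
      rw [mkOn_mul, pd_mkOn, pd_mkOn, pd_mkOn, mkOn_mul, mkOn_mul, mkOn_add, mkOn_eq_iff]
      filter_upwards [hf.eventually_analyticAt, hg.eventually_analyticAt] with x h1 h2
      have := (h1.differentiableAt.hasFDerivAt.mul h2.differentiableAt.hasFDerivAt).fderiv
      change fderiv ℂ (f * g) x _ = _
      rw [this]; rfl)

@[simp] lemma pdD_apply {n : ℕ} (i : Fin n) (g : On n) : pdD i g = pd i g := rfl

lemma coord_analytic {n : ℕ} (i : Fin n) : AnalyticAt ℂ (fun x : Fin n → ℂ => x i) 0 := by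
  have h := (ContinuousLinearMap.proj (R := ℂ) (φ := fun _ : Fin n => ℂ) i).analyticAt 0
  exact h

lemma coordG_eq {n : ℕ} (i : Fin n) : coordG i = mkOn (fun x : Fin n → ℂ => x i) (coord_analytic i) := rfl

lemma pd_coordG {n : ℕ} (i j : Fin n) : pd i (coordG j) = if i = j then 1 else 0 := by
  rw [coordG_eq, pd_mkOn]
  have : (if i = j then 1 else 0 : On n) = mkOn (fun _ => if i = j then 1 else 0) analyticAt_const := by
    split_ifs <;> rfl
  rw [this, mkOn_eq_iff]
  refine Filter.Eventually.of_forall fun x => ?_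
  have := (ContinuousLinearMap.proj (R := ℂ) (φ := fun _ : Fin n => ℂ) j).hasFDerivAt (x := x)
  have := this.fderiv
  change fderiv ℂ (ContinuousLinearMap.proj (R := ℂ) (φ := fun _ : Fin n => ℂ) j) x _ = _
  rw [this]
  simp [Pi.single_apply, eq_comm]

lemma ev0_coordG {n : ℕ} (j : Fin n) : ev0 (coordG j : On n) = 0 := by
  rw [coordG_eq, ev0_mkOn]; rfl

lemma isUnit_of_ev0 {n : ℕ} (g : On n) (h : ev0 g ≠ 0) : IsUnit g := by
  obtain ⟨f, hf, rfl⟩ := exists_mkOn g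
  rw [ev0_mkOn] at h
  refine IsUnit.of_mul_eq_one (mkOn (fun x => (f x)⁻¹) (hf.inv h)) ?_
  rw [mkOn_mul, one_mkOn, mkOn_eq_iff]
  filter_upwards [hf.continuousAt.eventually_ne h] with x hx
  exact mul_inv_cancel₀ hx

lemma hadamard_fun {n : ℕ} {f : (Fin n → ℂ) → ℂ} (hf : AnalyticAt ℂ f 0) :
    ∃ Q : (Fin n → ℂ) → ((Fin n → ℂ) →L[ℂ] ℂ), AnalyticAt ℂ Q 0 ∧
      ∀ᶠ x in 𝓝 0, f x = f 0 + Q x x := by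
  obtain ⟨p, r, hp⟩ := hf
  have hr : 0 < p.shift.radius := by
    rw [FormalMultilinearSeries.radius_shift]
    exact hp.r_pos.trans_le hp.r_le
  have hs := p.shift.hasFPowerSeriesOnBall hr
  refine ⟨p.shift.sum, hs.analyticAt, ?_⟩
  filter_upwards [Metric.eball_mem_nhds (0 : Fin n → ℂ) hp.r_pos,
    Metric.eball_mem_nhds (0 : Fin n → ℂ) hr] with x hx hx2
  have h1 := hp.hasSum hx
  have h2 := hs.hasSum hx2
  rw [zero_add] at h1 h2
  rw [← hasSum_nat_add_iff' 1] at h1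
  have h3 := (ContinuousLinearMap.apply ℂ ℂ x).hasSum h2
  have h4 := h1.unique (f := fun n => p (n+1) fun _ => x) (by
    convert h3 using 2 with k
    simp only [FormalMultilinearSeries.shift, ContinuousLinearMap.apply_apply,
      ContinuousMultilinearMap.curryRight_apply]
    congr 1
    ext j : 1
    refine Fin.lastCases ?_ (fun j => ?_) j <;> simp)
  simp only [Finset.range_one, Finset.sum_singleton] at h4
  rw [hp.coeff_zero] at h4
  rw [sub_eq_iff_eq_add, add_comm] at h4
  exact h4

lemma hadamard {n : ℕ} (g : On n) : ∃ k : Fin n → On n,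
    g = algebraMap ℂ (On n) (ev0 g) + ∑ i, k i * coordG i := by
  obtain ⟨f, hf, rfl⟩ := exists_mkOn g
  obtain ⟨Q, hQ, hfQ⟩ := hadamard_fun hf
  have hk : ∀ i : Fin n, AnalyticAt ℂ (fun x => Q x (Pi.single i 1)) 0 := fun i => by
    have h := ((ContinuousLinearMap.apply ℂ ℂ (Pi.single i 1)).analyticAt (Q 0)).comp hQ
    exact h
  refine ⟨fun i => mkOn _ (hk i), ?_⟩
  have hsum : ∀ s : Finset (Fin n), ∃ hs, ∑ i ∈ s, mkOn _ (hk i) * coordG i =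
      mkOn (fun x => ∑ i ∈ s, Q x (Pi.single i 1) * x i) hs := by
    intro s
    induction s using Finset.induction_on with
    | empty => exact ⟨by simpa using analyticAt_const, by simp; rfl⟩
    | insert a s ha ih =>
      obtain ⟨hs, ih⟩ := ih
      refine ⟨?_, ?_⟩
      · simp only [Finset.sum_insert ha]
        exact ((hk a).mul ((ContinuousLinearMap.proj (R := ℂ) (φ := fun _ : Fin n => ℂ) a).analyticAt _)).add hs
      · rw [Finset.sum_insert ha, ih, coordG_eq, mkOn_mul, mkOn_add, mkOn_eq_iff]
        refine Filter.Eventually.of_forall fun x => ?_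
        simp only [Finset.sum_insert ha]
  obtain ⟨hs, h⟩ := hsum Finset.univ
  rw [h, ev0_mkOn, algebraMap_mkOn, mkOn_add, mkOn_eq_iff]
  filter_upwards [hfQ] with x hx
  rw [hx]
  congr 1
  conv_lhs => rw [← Finset.univ_sum_single x]
  rw [map_sum]
  refine Finset.sum_congr rfl fun i _ => ?_
  have : Pi.single i (x i) = x i • (Pi.single i 1 : Fin n → ℂ) := by
    rw [← Pi.single_smul]; simp
  rw [Finset.univ_sum_single, this, map_smul, smul_eq_mul, mul_comm]

lemma mId_eq_span {n : ℕ} : mId n = Ideal.span (Set.range (coordG (n := n))) := by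
  apply le_antisymm
  · intro g hg
    rw [mem_mId] at hg
    obtain ⟨k, hk⟩ := hadamard g
    rw [hg, map_zero, zero_add] at hk
    rw [hk]
    exact Ideal.sum_mem _ fun i _ => Ideal.mul_mem_left _ _ (Ideal.subset_span ⟨i, rfl⟩)
  · rw [Ideal.span_le]
    rintro _ ⟨i, rfl⟩
    exact (mem_mId _).2 (ev0_coordG i)

/-- Linear part of a germ. -/
def lin {n : ℕ} : On n →ₗ[ℂ] (Fin n → ℂ) :=
  LinearMap.pi fun i => (ev0H n).toLinearMap ∘ₗ (pdD i).toLinearMap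

@[simp] lemma lin_apply {n : ℕ} (g : On n) (i : Fin n) : lin g i = ev0 (pd i g) := rfl

lemma lin_mul {n : ℕ} (a b : On n) : lin (a * b) = ev0 a • lin b + ev0 b • lin a := by
  ext i
  simp only [lin_apply, Pi.add_apply, Pi.smul_apply, smul_eq_mul]
  have := (pdD i).leibniz a b
  simp only [pdD_apply, smul_eq_mul] at this
  rw [this, ← ev0H_apply, map_add, map_mul, map_mul]; rfl

lemma lin_of_mem_sq {n : ℕ} {g : On n} (hg : g ∈ mId n ^ 2) : lin g = 0 := by
  rw [pow_two] at hg
  induction hg using Submodule.mul_induction_on' with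
  | mem_mul_mem a ha b hb =>
    rw [lin_mul, (mem_mId _).1 ha, (mem_mId _).1 hb]; simp
  | add x _ y _ hx hy => rw [map_add, hx, hy, add_zero]

lemma lin_coordG {n : ℕ} (i : Fin n) : lin (coordG i : On n) = Pi.single i 1 := by
  ext j
  rw [lin_apply, pd_coordG, Pi.single_apply, ← ev0H_apply]
  split_ifs
  · exact map_one _
  · exact map_zero _

lemma lin_algebraMap {n : ℕ} (c : ℂ) : lin (algebraMap ℂ (On n) c) = 0 := by
  ext j
  rw [lin_apply, ← pdD_apply, Derivation.map_algebraMap, ← ev0H_apply, map_zero]; rfl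

lemma mem_sq_of_lin {n : ℕ} {g : On n} (h0 : ev0 g = 0) (h1 : lin g = 0) : g ∈ mId n ^ 2 := by
  obtain ⟨k, hk⟩ := hadamard g
  rw [h0, map_zero, zero_add] at hk
  have h2 : ∀ i, ev0 (k i) = 0 := by
    intro i
    have : lin g = ∑ i, ev0 (k i) • Pi.single i 1 := by
      rw [hk, map_sum]
      refine Finset.sum_congr rfl fun i _ => ?_
      rw [lin_mul, ev0_coordG, lin_coordG]; simp
    have h3 := congrFun (this.symm.trans h1) i
    simpa [Finset.sum_apply, Pi.single_apply] using h3
  rw [hk, pow_two]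
  exact Ideal.sum_mem _ fun i _ => Ideal.mul_mem_mul ((mem_mId _).2 (h2 i)) ((mem_mId _).2 (ev0_coordG i))

lemma pd_mem_pow {n : ℕ} (i : Fin n) (k : ℕ) {g : On n} (hg : g ∈ mId n ^ (k+1)) : pd i g ∈ mId n ^ k := by
  induction k generalizing g with
  | zero => simp
  | succ k ih =>
    rw [pow_succ] at hg
    induction hg using Submodule.mul_induction_on' with
    | mem_mul_mem a ha b hb =>
      have := (pdD i).leibniz a b
      simp only [pdD_apply, smul_eq_mul] at this
      rw [this]
      refine Ideal.add_mem _ (Ideal.mul_mem_right _ _ ha) ?_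
      rw [pow_succ']
      exact Ideal.mul_mem_mul hb (ih ha)
    | add x _ y _ hx hy =>
      rw [← pdD_apply, map_add]
      exact Ideal.add_mem _ hx hy

/-- The derivation attached to a vector field. -/
def vfD {n : ℕ} (δ : Fin n → On n) : Derivation ℂ (On n) (On n) := ∑ i, δ i • pdD i

lemma vfD_apply {n : ℕ} (δ : Fin n → On n) (g : On n) : vfD δ g = applyVF δ g := by
  simp only [vfD, applyVF]
  rw [← Derivation.coeFnAddMonoidHom_apply, map_sum, Finset.sum_apply]
  rfl

lemma vfD_mem_pow {n : ℕ} {δ : Fin n → On n} (hδ : ∀ i, δ i ∈ mId n) (k : ℕ) {g : On n}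
    (hg : g ∈ mId n ^ k) : vfD δ g ∈ mId n ^ k := by
  rw [vfD_apply, applyVF]
  refine Ideal.sum_mem _ fun i _ => ?_
  cases k with
  | zero => simp
  | succ k =>
    rw [pow_succ']
    exact Ideal.mul_mem_mul (hδ i) (pd_mem_pow i k hg)

lemma ev0_vfD {n : ℕ} {δ : Fin n → On n} (hδ : ∀ i, δ i ∈ mId n) (g : On n) : ev0 (vfD δ g) = 0 := by
  rw [← mem_mId, vfD_apply, applyVF]
  exact Ideal.sum_mem _ fun i _ => Ideal.mul_mem_right _ _ (hδ i)

lemma lin_vfD {n : ℕ} {δ : Fin n → On n} (hδ : ∀ i, δ i ∈ mId n) (g : On n) :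
    lin (vfD δ g) = (linPart δ).mulVec (lin g) := by
  rw [vfD_apply, applyVF, map_sum]
  ext i
  simp only [Matrix.mulVec, dotProduct, linPart, Matrix.of_apply, Finset.sum_apply]
  refine Finset.sum_congr rfl fun j _ => ?_
  rw [lin_mul, (mem_mId _).1 (hδ j)]
  simp [mul_comm]

lemma mId_mem_jac {n : ℕ} : mId n ≤ Ideal.jacobson (⊥ : Ideal (On n)) := by
  intro g hg
  rw [Ideal.mem_jacobson_bot]
  intro y
  apply isUnit_of_ev0
  rw [← ev0H_apply, map_add, map_mul, ev0H_apply, (mem_mId _).1 hg, zero_mul, zero_add, map_one]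
  exact one_ne_zero

lemma mpow_le_generic {A : Type*} [CommRing A] [Algebra ℂ A] (I m : Ideal A)
    (hm : m ≤ Ideal.jacobson ⊥) (hI : FiniteDimensional ℂ (A ⧸ I)) :
    ∃ N, m ^ N ≤ I := by
  have : IsArtinianRing (A ⧸ I) := IsArtinianRing.of_finite ℂ _
  obtain ⟨N, hN⟩ := IsArtinianRing.isNilpotent_jacobson_bot (R := A ⧸ I)
  refine ⟨N, ?_⟩
  have h1 : Ideal.map (Ideal.Quotient.mk I) m ≤ Ideal.jacobson ⊥ := by
    rw [Ideal.map_le_iff_le_comap]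
    intro g hg
    rw [Ideal.mem_comap, Ideal.mem_jacobson_bot]
    intro y
    obtain ⟨y, rfl⟩ := Ideal.Quotient.mk_surjective y
    have := (Ideal.mem_jacobson_bot.1 (hm hg) y).map (Ideal.Quotient.mk I)
    simpa using this
  have h2 : Ideal.map (Ideal.Quotient.mk I) (m ^ N) ≤ ⊥ := by
    rw [Ideal.map_pow]
    calc _ ≤ _ := Ideal.pow_right_mono h1 N
      _ = _ := hN
  intro g hg
  have := h2 (Ideal.mem_map_of_mem _ hg)
  rwa [Ideal.mem_bot, Ideal.Quotient.eq_zero_iff_mem] at this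

lemma mpow_le_of_finite {n : ℕ} (I : Ideal (On n)) (hI : FiniteDimensional ℂ (On n ⧸ I)) :
    ∃ N, mId n ^ N ≤ I := mpow_le_generic I (mId n) mId_mem_jac hI

/-- approximations by polynomials in generators of the maximal ideal -/
lemma exists_poly {n : ℕ} {Y : Fin n → On n} (h0 : ∀ i, ev0 (Y i) = 0) (hY : mId n ≤ Ideal.span (Set.range Y)) (K : ℕ) (g : On n) :
    ∃ P : MvPolynomial (Fin n) ℂ, g - MvPolynomial.aeval Y P ∈ mId n ^ K := by
  induction K generalizing g with
  | zero => exact ⟨0, by simp⟩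
  | succ K ih =>
    have hg : g - algebraMap ℂ (On n) (ev0 g) ∈ mId n := by
      rw [mem_mId, ← ev0H_apply, map_sub, AlgHom.commutes]; simp
    obtain ⟨k, hk⟩ := (Ideal.mem_span_range_iff_exists_fun).1 (hY hg)
    choose P hP using fun i => ih (k i)
    refine ⟨MvPolynomial.C (ev0 g) + ∑ i, P i * MvPolynomial.X i, ?_⟩
    have e : g - MvPolynomial.aeval Y (MvPolynomial.C (ev0 g) + ∑ i, P i * MvPolynomial.X i) =
        ∑ i, (k i - MvPolynomial.aeval Y (P i)) * Y i := by
      simp only [map_add, map_sum, map_mul, MvPolynomial.aeval_X, MvPolynomial.algHom_C, sub_mul,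
        Finset.sum_sub_distrib]
      rw [hk]; ring
    rw [e, pow_succ]
    exact Ideal.sum_mem _ fun i _ => Ideal.mul_mem_mul (hP i) ((mem_mId _).2 (h0 i))

lemma span_eq {n : ℕ} {Y : Fin n → On n} (h0 : ∀ i, ev0 (Y i) = 0)
    (h1 : LinearIndependent ℂ (fun i => lin (Y i))) : mId n ≤ Ideal.span (Set.range Y) := by
  apply Submodule.le_of_le_smul_of_le_jacobson_bot (I := mId n) ?_ mId_mem_jac
  · intro g hg
    have hb := h1.span_eq_top_of_card_eq_finrank' (by simp)
    have : lin g ∈ Submodule.span ℂ (Set.range fun i => lin (Y i)) := by rw [hb]; trivial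
    obtain ⟨c, hc⟩ := (Submodule.mem_span_range_iff_exists_fun ℂ).1 this
    have e : g = ∑ i, c i • Y i + (g - ∑ i, c i • Y i) := by ring
    rw [e]
    apply Submodule.add_mem_sup
    · refine Ideal.sum_mem _ fun i _ => ?_
      rw [Algebra.smul_def]
      exact Ideal.mul_mem_left _ _ (Ideal.subset_span ⟨i, rfl⟩)
    · rw [smul_eq_mul, ← pow_two]
      apply mem_sq_of_lin
      · rw [← ev0H_apply, map_sub, map_sum, ev0H_apply, (mem_mId _).1 hg, zero_sub, neg_eq_zero]
        refine Finset.sum_eq_zero fun i _ => ?_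
        rw [map_smul, ev0H_apply, h0, smul_zero]
      · rw [map_sub, map_sum, sub_eq_zero, ← hc]
        simp only [map_smul]
  · rw [mId_eq_span]
    exact Submodule.fg_span (Set.finite_range _)

lemma aeval_mem_pow {n : ℕ} {Y : Fin n → On n} (h0 : ∀ i, ev0 (Y i) = 0) (K : ℕ)
    {P : MvPolynomial (Fin n) ℂ} (hP : P ∈ MvPolynomial.idealOfVars (Fin n) ℂ ^ K) :
    MvPolynomial.aeval Y P ∈ mId n ^ K := by
  have : MvPolynomial.idealOfVars (Fin n) ℂ ≤ Ideal.comap (MvPolynomial.aeval Y) (mId n) := by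
    rw [MvPolynomial.idealOfVars, Ideal.span_le]
    rintro _ ⟨i, rfl⟩
    simp [mem_mId, h0]
  exact Ideal.le_comap_pow _ K (Ideal.pow_right_mono this K hP)

lemma pd_aeval {n : ℕ} (Y : Fin n → On n) (l : Fin n) (P : MvPolynomial (Fin n) ℂ) :
    pd l (MvPolynomial.aeval Y P) =
      ∑ j, MvPolynomial.aeval Y (MvPolynomial.pderiv j P) * pd l (Y j) := by
  have hleib : ∀ a b : On n, pd l (a * b) = a * pd l b + b * pd l a := fun a b => (pdD l).leibniz a b
  induction P using MvPolynomial.induction_on with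
  | C a =>
    simp only [MvPolynomial.algHom_C, MvPolynomial.pderiv_C, map_zero, zero_mul, Finset.sum_const_zero]
    exact (pdD l).map_algebraMap a
  | add p q hp hq =>
    have : ∀ a b : On n, pd l (a + b) = pd l a + pd l b := fun a b => map_add (pdD l) a b
    rw [map_add, this, hp, hq, ← Finset.sum_add_distrib]
    refine Finset.sum_congr rfl fun j _ => ?_
    rw [map_add, map_add, add_mul]
  | mul_X p i hp =>
    rw [map_mul, MvPolynomial.aeval_X, hleib, hp]
    have : ∀ j, MvPolynomial.aeval Y (MvPolynomial.pderiv j (p * MvPolynomial.X i)) * pd l (Y j) =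
      (if i = j then MvPolynomial.aeval Y p * pd l (Y j) else 0) +
       Y i * (MvPolynomial.aeval Y (MvPolynomial.pderiv j p) * pd l (Y j)) := by
      intro j
      rw [Derivation.leibniz, MvPolynomial.pderiv_X]
      by_cases hij : i = j
      · subst hij; simp; ring
      · simp [hij]; ring
    rw [Finset.sum_congr rfl fun j _ => this j, Finset.sum_add_distrib, Finset.mul_sum]
    simp

lemma mem_pow_of_aeval {n : ℕ} {Y : Fin n → On n} (h0 : ∀ i, ev0 (Y i) = 0)
    (h1 : LinearIndependent ℂ (fun i => lin (Y i))) (K : ℕ)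
    (P : MvPolynomial (Fin n) ℂ) (hP : MvPolynomial.aeval Y P ∈ mId n ^ K) :
    P ∈ MvPolynomial.idealOfVars (Fin n) ℂ ^ K := by
  induction K generalizing P with
  | zero => simp
  | succ K ih =>
    let J : Matrix (Fin n) (Fin n) (On n) := Matrix.of fun l j => pd l (Y j)
    have hJ : IsUnit J.det := by
      apply isUnit_of_ev0
      rw [← ev0H_apply, AlgHom.map_det]
      have h2 : Matrix.transpose ((ev0H n).mapMatrix J) = Matrix.of (fun i => lin (Y i)) := by
        ext i j; rfl
      rw [← Matrix.det_transpose, h2]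
      exact ((Matrix.isUnit_iff_isUnit_det _).1 (Matrix.linearIndependent_rows_iff_isUnit.1 h1)).ne_zero
    have h2 : ∀ l, pd l (MvPolynomial.aeval Y P) ∈ mId n ^ K := fun l => pd_mem_pow l K hP
    have h3 : ∀ j, MvPolynomial.aeval Y (MvPolynomial.pderiv j P) ∈ mId n ^ K := by
      set u : Fin n → On n := fun j => MvPolynomial.aeval Y (MvPolynomial.pderiv j P) with hu
      have e1 : J.mulVec u = fun l => pd l (MvPolynomial.aeval Y P) := by
        ext l : 1
        rw [pd_aeval, Matrix.mulVec, dotProduct]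
        exact Finset.sum_congr rfl fun j _ => mul_comm _ _
      have e2 : u = (J⁻¹).mulVec (fun l => pd l (MvPolynomial.aeval Y P)) := by
        rw [← e1, Matrix.mulVec_mulVec, Matrix.nonsing_inv_mul _ hJ, Matrix.one_mulVec]
      intro j
      change u j ∈ _
      rw [e2, Matrix.mulVec, dotProduct]
      exact Ideal.sum_mem _ fun i _ => Ideal.mul_mem_left _ _ (h2 i)
    rw [MvPolynomial.mem_pow_idealOfVars_iff]
    intro a ha
    by_cases ha0 : a = 0
    · exfalso
      have h4 : ev0H n (MvPolynomial.aeval Y P) = 0 :=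
        (mem_mId _).1 (Ideal.pow_le_self (Nat.succ_ne_zero K) hP)
      have h5 : ev0H n (MvPolynomial.aeval Y P) = MvPolynomial.constantCoeff P := by
        rw [MvPolynomial.comp_aeval_apply]
        have : (fun i => ev0H n (Y i)) = 0 := funext h0
        rw [this, MvPolynomial.aeval_zero]; rfl
      rw [ha0, MvPolynomial.mem_support_iff] at ha
      exact ha (by rw [← h4, h5]; rfl)
    · obtain ⟨j, hj⟩ := Finsupp.ne_iff.1 ha0
      have hj' : 1 ≤ a j := Nat.one_le_iff_ne_zero.2 (by simpa using hj)
      have e : a - Finsupp.single j 1 + Finsupp.single j 1 = a :=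
        tsub_add_cancel_of_le (by simpa [Finsupp.single_le_iff] using hj')
      have h4 : a - Finsupp.single j 1 ∈ (MvPolynomial.pderiv j P).support := by
        rw [MvPolynomial.mem_support_iff, MvPolynomial.coeff_pderiv, e]
        refine mul_ne_zero (MvPolynomial.mem_support_iff.1 ha) ?_
        norm_cast
      have h5 := (MvPolynomial.mem_pow_idealOfVars_iff _ _).1 (ih _ (h3 j)) _ h4
      rw [← e]
      simpa using h5

instance finite_quot {n : ℕ} (K : ℕ) : FiniteDimensional ℂ (On n ⧸ (mId n ^ K).restrictScalars ℂ) := by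
  let φ : MvPolynomial (Fin n) ℂ →ₗ[ℂ] (On n ⧸ (mId n ^ K).restrictScalars ℂ) :=
    ((mId n ^ K).restrictScalars ℂ).mkQ ∘ₗ (MvPolynomial.aeval (coordG (n := n))).toLinearMap
  have hφ : Function.Surjective φ := by
    intro y
    obtain ⟨g, rfl⟩ := Submodule.mkQ_surjective _ y
    obtain ⟨P, hP⟩ := exists_poly ev0_coordG mId_eq_span.le K g
    refine ⟨P, ?_⟩
    symm
    change Submodule.Quotient.mk g = Submodule.Quotient.mk _
    rw [Submodule.Quotient.eq]
    exact hP
  have hfin := Finsupp.finite_of_degree_le (σ := Fin n) K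
  refine ⟨⟨(hfin.image fun a => φ (MvPolynomial.monomial a 1)).toFinset, ?_⟩⟩
  rw [eq_top_iff, ← LinearMap.range_eq_top.2 hφ]
  rintro _ ⟨P, rfl⟩
  rw [P.as_sum, map_sum]
  refine Submodule.sum_mem _ fun a _ => ?_
  have e : MvPolynomial.monomial a (P.coeff a) = P.coeff a • MvPolynomial.monomial a (1 : ℂ) := by
    simp [MvPolynomial.smul_monomial]
  rw [e, map_smul]
  apply Submodule.smul_mem
  by_cases ha : a.degree ≤ K
  · apply Submodule.subset_span
    simp only [Set.Finite.coe_toFinset]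
    exact ⟨a, ha, rfl⟩
  · have : φ (MvPolynomial.monomial a 1) = 0 := by
      change Submodule.Quotient.mk _ = _
      rw [Submodule.Quotient.mk_eq_zero]
      apply aeval_mem_pow ev0_coordG
      rw [MvPolynomial.mem_pow_idealOfVars_iff]
      intro x hx
      have := MvPolynomial.support_monomial_subset hx
      rw [Finset.mem_singleton] at this
      rw [this]; omega
    rw [this]; exact Submodule.zero_mem _

section gen
variable {V : Type*} [AddCommGroup V] [Module ℂ V] (U : Submodule ℂ V) (E : V →ₗ[ℂ] V) (hE : U ≤ U.comap E)

/-- generalized eigenspaces modulo a submodule -/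
def genE (μ : ℂ) : Submodule ℂ V :=
  ((Module.End.maxGenEigenspace (U.mapQ U E hE : Module.End ℂ (V ⧸ U)) μ)).comap U.mkQ

/-- the shifted operator -/
def shiftE (μ : ℂ) : Module.End ℂ V := E - algebraMap ℂ (Module.End ℂ V) μ

lemma shiftE_apply (μ : ℂ) (g : V) : shiftE E μ g = E g - μ • g := by
  simp [shiftE]

lemma mem_genE (μ : ℂ) (g : V) : g ∈ genE U E hE μ ↔ ∃ k : ℕ, ((shiftE E μ) ^ k) g ∈ U := by
  rw [genE, Submodule.mem_comap, Module.End.mem_maxGenEigenspace]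
  refine exists_congr fun k => ?_
  have h : ∀ (k : ℕ) (g : V), (((U.mapQ U E hE : Module.End ℂ (V ⧸ U)) - μ • (1 : Module.End ℂ (V ⧸ U))) ^ k) (U.mkQ g) =
      U.mkQ (((shiftE E μ) ^ k) g) := by
    intro k
    induction k with
    | zero => intro g; simp
    | succ k ih =>
      intro g
      rw [pow_succ, pow_succ, Module.End.mul_apply, Module.End.mul_apply, ← ih]
      congr 1
  rw [h, Submodule.mkQ_apply, Submodule.Quotient.mk_eq_zero]

lemma le_genE (μ : ℂ) : U ≤ genE U E hE μ := fun g hg => (mem_genE U E hE μ g).2 ⟨0, by simpa⟩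

lemma mem_genE_of_shift (μ : ℂ) (g : V) (h : shiftE E μ g ∈ genE U E hE μ) : g ∈ genE U E hE μ := by
  obtain ⟨k, hk⟩ := (mem_genE U E hE μ _).1 h
  exact (mem_genE U E hE μ _).2 ⟨k+1, by rw [pow_succ, Module.End.mul_apply]; exact hk⟩

lemma iSup_genE [FiniteDimensional ℂ (V ⧸ U)] : ⨆ μ, genE U E hE μ = ⊤ := by
  have h1 : Submodule.map U.mkQ (⨆ μ, genE U E hE μ) = ⊤ := by
    rw [Submodule.map_iSup]
    rw [← Module.End.iSup_maxGenEigenspace_eq_top (U.mapQ U E hE : Module.End ℂ (V ⧸ U))]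
    refine iSup_congr fun μ => ?_
    exact Submodule.map_comap_eq_of_surjective (Submodule.mkQ_surjective _) _
  have h2 := congrArg (Submodule.comap U.mkQ) h1
  rw [Submodule.comap_map_eq, Submodule.ker_mkQ, Submodule.comap_top] at h2
  rwa [sup_eq_left.2 ((le_genE U E hE 0).trans (le_iSup _ 0))] at h2

lemma genE_disj (μ : ℂ) (g : V) (h1 : g ∈ genE U E hE μ) (h2 : g ∈ ⨆ ν, ⨆ (_ : ν ≠ μ), genE U E hE ν) : g ∈ U := by
  have h := Module.End.independent_maxGenEigenspace (U.mapQ U E hE : Module.End ℂ (V ⧸ U)) μ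
  have h3 : U.mkQ g ∈ ⨆ ν, ⨆ (_ : ν ≠ μ), Module.End.maxGenEigenspace (U.mapQ U E hE : Module.End ℂ (V ⧸ U)) ν := by
    have h4 := Submodule.mem_map_of_mem (f := U.mkQ) h2
    rw [Submodule.map_iSup] at h4
    refine SetLike.le_def.1 (iSup_mono fun ν => ?_) h4
    rw [Submodule.map_iSup]
    exact iSup_mono fun _ => Submodule.map_comap_le _ _
  have := Submodule.disjoint_def.1 h _ h1 h3
  rwa [Submodule.mkQ_apply, Submodule.Quotient.mk_eq_zero] at this
end gen

/-- powers of the maximal ideal as complex subspaces -/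
abbrev mU (n K : ℕ) : Submodule ℂ (On n) := (mId n ^ K).restrictScalars ℂ

section D
variable {n : ℕ} (δ : Fin n → On n) (hδ : ∀ i, δ i ∈ mId n) (K : ℕ)

lemma vfD_stable {n : ℕ} {δ : Fin n → On n} (hδ : ∀ i, δ i ∈ mId n) (K : ℕ) :
    mU n K ≤ (mU n K).comap (vfD δ).toLinearMap :=
  fun _ hg => vfD_mem_pow hδ K hg

lemma genE_mul (a b : On n) (μ ν : ℂ)
    (ha : a ∈ genE (mU n K) (vfD δ).toLinearMap (vfD_stable hδ K) μ)
    (hb : b ∈ genE (mU n K) (vfD δ).toLinearMap (vfD_stable hδ K) ν) :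
    a * b ∈ genE (mU n K) (vfD δ).toLinearMap (vfD_stable hδ K) (μ + ν) := by
  obtain ⟨i, hi⟩ := (mem_genE _ _ _ _ _).1 ha
  obtain ⟨j, hj⟩ := (mem_genE _ _ _ _ _).1 hb
  clear ha hb
  generalize hN : i + j = N
  induction N generalizing i j a b with
  | zero =>
    apply le_genE
    obtain rfl : i = 0 := by omega
    exact Ideal.mul_mem_right _ _ hi
  | succ N ih =>
    rcases Nat.eq_zero_or_pos i with rfl | hi0
    · exact le_genE _ _ _ _ (Ideal.mul_mem_right _ _ hi)
    rcases Nat.eq_zero_or_pos j with rfl | hj0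
    · exact le_genE _ _ _ _ (Ideal.mul_mem_left _ _ hj)
    obtain ⟨i, rfl⟩ := Nat.exists_eq_add_of_lt hi0
    obtain ⟨j, rfl⟩ := Nat.exists_eq_add_of_lt hj0
    apply mem_genE_of_shift
    have e : shiftE (vfD δ).toLinearMap (μ + ν) (a * b) =
      (shiftE (vfD δ).toLinearMap μ a) * b + a * (shiftE (vfD δ).toLinearMap ν b) := by
      simp only [shiftE_apply, Derivation.coeFn_coe, Derivation.leibniz, smul_eq_mul, Algebra.smul_def, map_add]
      ring
    rw [e]
    refine Submodule.add_mem _ ?_ ?_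
    · refine ih _ _ i (by rw [← Module.End.mul_apply, ← pow_succ]; simpa using hi) (0 + j + 1) hj (by omega)
    · refine ih _ _ (0 + i + 1) hi j (by rw [← Module.End.mul_apply, ← pow_succ]; simpa using hj) (by omega)

lemma algebraMap_mem_genE (c : ℂ) : algebraMap ℂ (On n) c ∈ genE (mU n K) (vfD δ).toLinearMap (vfD_stable hδ K) 0 := by
  apply mem_genE_of_shift
  simp [shiftE_apply]

lemma genE_pow (a : On n) (μ : ℂ) (ha : a ∈ genE (mU n K) (vfD δ).toLinearMap (vfD_stable hδ K) μ) (k : ℕ) :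
    a ^ k ∈ genE (mU n K) (vfD δ).toLinearMap (vfD_stable hδ K) (k * μ) := by
  induction k with
  | zero => simpa using algebraMap_mem_genE δ hδ K 1
  | succ k ih =>
    have := genE_mul δ hδ K _ _ _ _ ih ha
    rw [pow_succ]
    convert this using 1
    push_cast; ring

lemma genE_prod {ι : Type*} (s : Finset ι) (a : ι → On n) (μ : ι → ℂ)
    (ha : ∀ i, a i ∈ genE (mU n K) (vfD δ).toLinearMap (vfD_stable hδ K) (μ i)) :
    ∏ i ∈ s, a i ∈ genE (mU n K) (vfD δ).toLinearMap (vfD_stable hδ K) (∑ i ∈ s, μ i) := by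
  classical
  induction s using Finset.induction_on with
  | empty => simpa using algebraMap_mem_genE δ hδ K 1
  | insert i s hi ih =>
    rw [Finset.prod_insert hi, Finset.sum_insert hi]
    exact genE_mul δ hδ K _ _ _ _ (ha i) ih

lemma monomial_mem_genE (Y : Fin n → On n) (μ : Fin n → ℂ)
    (ha : ∀ i, Y i ∈ genE (mU n K) (vfD δ).toLinearMap (vfD_stable hδ K) (μ i)) (a : Fin n →₀ ℕ) (c : ℂ) :
    MvPolynomial.aeval Y (MvPolynomial.monomial a c) ∈
      genE (mU n K) (vfD δ).toLinearMap (vfD_stable hδ K) (∑ i, (a i : ℂ) * μ i) := by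
  rw [MvPolynomial.aeval_monomial, ← Algebra.smul_def]
  apply Submodule.smul_mem
  rw [Finsupp.prod_fintype _ _ (by simp)]
  exact genE_prod δ hδ K _ _ _ fun i => genE_pow δ hδ K _ _ (ha i) _

/-- An element of a generalized eigenspace is approximated by a weighted homogeneous polynomial. -/
lemma extract (Y : Fin n → On n) (v : Fin n → ℚ) (h0 : ∀ i, ev0 (Y i) = 0)
    (h1 : LinearIndependent ℂ (fun i => lin (Y i)))
    (ha : ∀ i, Y i ∈ genE (mU n K) (vfD δ).toLinearMap (vfD_stable hδ K) (v i : ℂ)) (μ : ℂ) (g : On n)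
    (hg : g ∈ genE (mU n K) (vfD δ).toLinearMap (vfD_stable hδ K) μ) :
    ∃ P : MvPolynomial (Fin n) ℂ, (∀ a ∈ P.support, ((∑ i, (a i : ℚ) * v i : ℚ) : ℂ) = μ) ∧
      g - MvPolynomial.aeval Y P ∈ mId n ^ K := by
  classical
  obtain ⟨P0, hP0⟩ := exists_poly h0 (span_eq h0 h1) K g
  set wt : (Fin n →₀ ℕ) → ℂ := fun a => ((∑ i, (a i : ℚ) * v i : ℚ) : ℂ) with hwt
  set P1 := ∑ a ∈ P0.support.filter (fun a => wt a = μ), MvPolynomial.monomial a (P0.coeff a) with hP1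
  set P2 := ∑ a ∈ P0.support.filter (fun a => ¬ wt a = μ), MvPolynomial.monomial a (P0.coeff a) with hP2
  have hs : P1 + P2 = P0 := by
    rw [hP1, hP2, Finset.sum_filter_add_sum_filter_not, ← P0.as_sum]
  have hm : ∀ (a : Fin n →₀ ℕ) (c : ℂ), MvPolynomial.aeval Y (MvPolynomial.monomial a c) ∈
      genE (mU n K) (vfD δ).toLinearMap (vfD_stable hδ K) (wt a) := by
    intro a c
    have := monomial_mem_genE δ hδ K Y (fun i => (v i : ℂ)) ha a c
    simp only [hwt]
    push_cast
    exact this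
  refine ⟨P1, ?_, ?_⟩
  · intro a ha
    obtain ⟨b, hb, hab⟩ := Finset.mem_biUnion.1 (MvPolynomial.support_sum ha)
    have := MvPolynomial.support_monomial_subset hab
    rw [Finset.mem_singleton] at this
    rw [this]
    exact (Finset.mem_filter.1 hb).2
  · refine genE_disj (mU n K) (vfD δ).toLinearMap (vfD_stable hδ K) μ _ ?_ ?_
    · refine Submodule.sub_mem _ hg ?_
      rw [hP1, map_sum]
      refine Submodule.sum_mem _ fun a ha => ?_
      rw [← (Finset.mem_filter.1 ha).2]
      exact hm _ _
    · have e : g - MvPolynomial.aeval Y P1 = (g - MvPolynomial.aeval Y P0) + MvPolynomial.aeval Y P2 := by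
        rw [← hs, map_add]; ring
      rw [e]
      refine Submodule.add_mem _ ?_ ?_
      · refine Submodule.mem_iSup_of_mem (μ + 1) (Submodule.mem_iSup_of_mem (by simp) ?_)
        exact le_genE _ _ _ _ hP0
      · rw [hP2, map_sum]
        refine Submodule.sum_mem _ fun a ha => ?_
        exact Submodule.mem_iSup_of_mem (wt a) (Submodule.mem_iSup_of_mem (Finset.mem_filter.1 ha).2 (hm _ _))

/-- the weight can be taken rational -/
lemma extract_wt (Y : Fin n → On n) (v : Fin n → ℚ) (h0 : ∀ i, ev0 (Y i) = 0)
    (h1 : LinearIndependent ℂ (fun i => lin (Y i)))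
    (ha : ∀ i, Y i ∈ genE (mU n K) (vfD δ).toLinearMap (vfD_stable hδ K) (v i : ℂ)) (μ : ℂ) (g : On n)
    (hg : g ∈ genE (mU n K) (vfD δ).toLinearMap (vfD_stable hδ K) μ) :
    ∃ (P : MvPolynomial (Fin n) ℂ) (d : ℚ), WtHom v d P ∧ (∀ e : ℚ, μ = e → WtHom v e P) ∧
      g - MvPolynomial.aeval Y P ∈ mId n ^ K := by
  obtain ⟨P, hP, hgP⟩ := extract δ hδ K Y v h0 h1 ha μ g hg
  have h2 : ∀ e : ℚ, μ = e → WtHom v e P := by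
    intro e he a ha
    have := hP a ha
    rw [he] at this
    exact_mod_cast this
  by_cases hd : ∃ d : ℚ, μ = d
  · obtain ⟨d, hd⟩ := hd
    exact ⟨P, d, h2 d hd, h2, hgP⟩
  · refine ⟨P, 0, ?_, h2, hgP⟩
    intro a ha
    exact absurd ⟨_, (hP a ha).symm⟩ hd

lemma ev0_of_genE (hK : 1 ≤ K) (μ : ℂ) (hμ : μ ≠ 0) (g : On n)
    (hg : g ∈ genE (mU n K) (vfD δ).toLinearMap (vfD_stable hδ K) μ) : ev0 g = 0 := by
  obtain ⟨k, hk⟩ := (mem_genE _ _ _ _ _).1 hg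
  have h1 : ∀ (k : ℕ) (g : On n), ev0H n ((shiftE (vfD δ).toLinearMap μ ^ k) g) = (-μ) ^ k * ev0H n g := by
    intro k
    induction k with
    | zero => intro g; simp
    | succ k ih =>
      intro g
      rw [pow_succ, Module.End.mul_apply, ih, shiftE_apply, map_sub, map_smul, pow_succ, mul_assoc]
      have : ev0H n ((vfD δ).toLinearMap g) = 0 := ev0_vfD hδ g
      rw [this, zero_sub, smul_eq_mul, neg_mul]
  have h2 : ev0H n ((shiftE (vfD δ).toLinearMap μ ^ k) g) = 0 :=
    (mem_mId _).1 (Ideal.pow_le_self (by omega) hk)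
  rw [h1] at h2
  exact (mul_eq_zero.1 h2).resolve_left (pow_ne_zero _ (neg_ne_zero.2 hμ))

lemma lin_genE (hK : 2 ≤ K) (μ : ℂ) (g : On n)
    (hg : g ∈ genE (mU n K) (vfD δ).toLinearMap (vfD_stable hδ K) μ) :
    lin g ∈ Module.End.maxGenEigenspace (Matrix.toLin' (linPart δ)) μ := by
  obtain ⟨k, hk⟩ := (mem_genE _ _ _ _ _).1 hg
  rw [Module.End.mem_maxGenEigenspace]
  refine ⟨k, ?_⟩
  have h1 : ∀ (k : ℕ) (g : On n), lin ((shiftE (vfD δ).toLinearMap μ ^ k) g) =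
      ((Matrix.toLin' (linPart δ) - μ • (1 : Module.End ℂ (Fin n → ℂ))) ^ k) (lin g) := by
    intro k
    induction k with
    | zero => intro g; simp
    | succ k ih =>
      intro g
      rw [pow_succ, Module.End.mul_apply, ih, shiftE_apply, map_sub, map_smul, pow_succ, Module.End.mul_apply]
      congr 1
      have : lin ((vfD δ).toLinearMap g) = (linPart δ).mulVec (lin g) := lin_vfD hδ g
      rw [this]; simp
  rw [← h1]
  exact lin_of_mem_sq (Ideal.pow_le_pow_right hK hk)

lemma exists_coords (hK : 2 ≤ K) (w : Fin n → ℚ) (hw : EigsEq δ w) (hneg : ∃ i, w i ≤ 0) :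
    ∃ (Y : Fin n → On n) (v : Fin n → ℚ), (∀ i, ev0 (Y i) = 0) ∧
      LinearIndependent ℂ (fun i => lin (Y i)) ∧
      (∀ i, Y i ∈ genE (mU n K) (vfD δ).toLinearMap (vfD_stable hδ K) (v i : ℂ)) ∧
      ∃ i, v i ≤ 0 := by
  let W := genE (mU n K) (vfD δ).toLinearMap (vfD_stable hδ K)
  have hroot : ∀ μ : ℂ, (linPart δ).charpoly.IsRoot μ ↔ ∃ i, μ = w i := by
    intro μ
    rw [hw, Polynomial.IsRoot.def, Polynomial.eval_prod, Finset.prod_eq_zero_iff]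
    simp [sub_eq_zero]
  have heig : ∀ μ : ℂ, Module.End.HasEigenvalue (Matrix.toLin' (linPart δ)) μ ↔ ∃ i, μ = w i := by
    intro μ
    rw [← hroot, Module.End.hasEigenvalue_iff_isRoot_charpoly, Matrix.charpoly_toLin']
  let T : Set (Fin n → ℂ) := {x | ∃ μ, ∃ g ∈ W μ, lin g = x}
  have hT : Submodule.span ℂ T = ⊤ := by
    have h1 : Submodule.map lin (⨆ μ, W μ) = ⊤ := by
      rw [iSup_genE, Submodule.map_top, eq_top_iff]
      intro x _
      refine ⟨∑ i, x i • coordG i, ?_⟩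
      rw [map_sum]
      simp only [map_smul, lin_coordG]
      ext j
      simp [Pi.single_apply]
    rw [eq_top_iff, ← h1, Submodule.map_iSup, iSup_le_iff]
    rintro μ _ ⟨g, hg, rfl⟩
    exact Submodule.subset_span ⟨μ, g, hg, rfl⟩
  obtain ⟨B, hBT, hB, hBi⟩ := exists_linearIndependent ℂ T
  rw [hT] at hB
  let b := Module.Basis.mk hBi (by rw [Subtype.range_coe, hB])
  have hfin : Finite B := Module.Finite.finite_basis b
  have : Fintype B := Fintype.ofFinite B
  have hcard : Fintype.card B = n := by
    rw [← Module.finrank_eq_card_basis b]; simp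
  let e : Fin n ≃ B := (Fintype.equivFinOfCardEq hcard).symm
  have hex : ∀ i : Fin n, ∃ (y : On n) (q : ℚ), ev0 y = 0 ∧ y ∈ W q ∧ lin y = (e i : Fin n → ℂ) := by
    intro i
    obtain ⟨μ, g, hg, hgx⟩ := hBT (e i).2
    have hl := lin_genE δ hδ K hK μ g hg
    have hne : lin g ≠ 0 := by rw [hgx]; exact hBi.ne_zero (e i)
    have hev : Module.End.HasEigenvalue (Matrix.toLin' (linPart δ)) μ := by
      obtain ⟨k, hk⟩ := (Module.End.mem_maxGenEigenspace _ _ _).1 hl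
      apply Module.End.hasEigenvalue_of_hasGenEigenvalue (k := k)
      intro hbot
      have : lin g ∈ Module.End.genEigenspace (Matrix.toLin' (linPart δ)) μ k := by
        rw [Module.End.mem_genEigenspace_nat, LinearMap.mem_ker]; exact hk
      rw [hbot] at this
      exact hne ((Submodule.mem_bot ℂ).1 this)
    obtain ⟨j, hj⟩ := (heig μ).1 hev
    by_cases hμ : μ = 0
    · refine ⟨g - algebraMap ℂ (On n) (ev0 g), 0, ?_, ?_, ?_⟩
      · rw [← ev0H_apply, map_sub, AlgHom.commutes]; simp
      · refine Submodule.sub_mem _ ?_ ?_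
        · simpa [hμ] using hg
        · simpa using algebraMap_mem_genE δ hδ K (ev0 g)
      · rw [map_sub, lin_algebraMap, sub_zero, hgx]
    · exact ⟨g, w j, ev0_of_genE δ hδ K (by omega) μ hμ g hg, by rw [← hj]; exact hg, hgx⟩
  choose Y v h1 h2 h3 using hex
  have hli : LinearIndependent ℂ (fun i => lin (Y i)) := by
    simp only [h3]
    exact hBi.comp e e.injective
  refine ⟨Y, v, h1, hli, h2, ?_⟩
  obtain ⟨i0, hi0⟩ := hneg
  by_contra! hcon
  obtain ⟨x, hx⟩ := ((heig (w i0)).2 ⟨i0, rfl⟩).exists_hasEigenvector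
  have hx1 : x ∈ Module.End.maxGenEigenspace (Matrix.toLin' (linPart δ)) (w i0 : ℂ) :=
    Module.End.eigenspace_le_maxGenEigenspace hx.1
  have hx2 : x ∈ ⨆ ν, ⨆ (_ : ν ≠ (w i0 : ℂ)), Module.End.maxGenEigenspace (Matrix.toLin' (linPart δ)) ν := by
    have : x ∈ Submodule.span ℂ (Set.range fun i => lin (Y i)) := by
      rw [hli.span_eq_top_of_card_eq_finrank' (by simp)]; trivial
    refine (Submodule.span_le.2 ?_) this
    rintro _ ⟨i, rfl⟩
    refine Submodule.mem_iSup_of_mem (v i : ℂ) (Submodule.mem_iSup_of_mem ?_ (lin_genE δ hδ K hK _ _ (h2 i)))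
    have := hcon i
    intro h
    have h' : v i = w i0 := by exact_mod_cast h
    linarith
  exact hx.2 (Submodule.disjoint_def.1 (Module.End.independent_maxGenEigenspace _ _) _ hx1 hx2)
end D

lemma ev0_of_genE_gen {n : ℕ} (E : On n →ₗ[ℂ] On n) (K : ℕ) (hE : mU n K ≤ (mU n K).comap E)
    (hE0 : ∀ g, ev0 (E g) = 0) (hK : 1 ≤ K) (μ : ℂ) (hμ : μ ≠ 0) (g : On n)
    (hg : g ∈ genE (mU n K) E hE μ) : ev0 g = 0 := by
  obtain ⟨k, hk⟩ := (mem_genE _ _ _ _ _).1 hg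
  have h1 : ∀ (k : ℕ) (g : On n), ev0H n ((shiftE E μ ^ k) g) = (-μ) ^ k * ev0H n g := by
    intro k
    induction k with
    | zero => intro g; simp
    | succ k ih =>
      intro g
      rw [pow_succ, Module.End.mul_apply, ih, shiftE_apply, map_sub, map_smul, pow_succ, mul_assoc]
      have : ev0H n (E g) = 0 := hE0 g
      rw [this, zero_sub, smul_eq_mul, neg_mul]
  have h2 : ev0H n ((shiftE E μ ^ k) g) = 0 :=
    (mem_mId _).1 (Ideal.pow_le_self (by omega) hk)
  rw [h1] at h2
  exact (mul_eq_zero.1 h2).resolve_left (pow_ne_zero _ (neg_ne_zero.2 hμ))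

lemma exists_unit {n : ℕ} {δ : Fin n → On n} (hδ : ∀ i, δ i ∈ mId n) (K : ℕ) (hK : 1 ≤ K)
    (h α : On n) (hα : vfD δ h = α * h) :
    ∃ u : On n, ev0 u ≠ 0 ∧ u * h ∈ genE (mU n K) (vfD δ).toLinearMap (vfD_stable hδ K) (ev0 α) := by
  let c : On n := α - algebraMap ℂ (On n) (ev0 α)
  have hc : ev0 c = 0 := by
    rw [← ev0H_apply, map_sub, AlgHom.commutes]; simp
  let E : On n →ₗ[ℂ] On n := (vfD δ).toLinearMap + LinearMap.mulLeft ℂ c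
  have hEa : ∀ g, E g = vfD δ g + c * g := fun g => rfl
  have hE : mU n K ≤ (mU n K).comap E := by
    intro g hg
    change E g ∈ mId n ^ K
    rw [hEa]
    exact Ideal.add_mem _ (vfD_mem_pow hδ K hg) (Ideal.mul_mem_left _ _ hg)
  have hE0 : ∀ g, ev0 (E g) = 0 := by
    intro g
    have h1 : ev0H n (vfD δ g) = 0 := ev0_vfD hδ g
    have h2 : ev0H n c = 0 := hc
    rw [hEa, ← ev0H_apply, map_add, map_mul, h1, h2]; simp
  obtain ⟨u, hu, hu0⟩ : ∃ u ∈ genE (mU n K) E hE 0, ev0 u ≠ 0 := by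
    by_contra! hcon
    have h1 : (⊤ : Submodule ℂ (On n)) ≤ LinearMap.ker (ev0H n).toLinearMap := by
      rw [← iSup_genE (mU n K) E hE, iSup_le_iff]
      intro μ g hg
      rw [LinearMap.mem_ker]
      change ev0 g = 0
      by_cases hμ : μ = 0
      · subst hμ; exact hcon g hg
      · exact ev0_of_genE_gen E K hE hE0 hK μ hμ g hg
    have h2 : ev0H n 1 = 0 := h1 (x := 1) trivial
    rw [map_one] at h2
    exact one_ne_zero h2
  refine ⟨u, hu0, ?_⟩
  obtain ⟨k, hk⟩ := (mem_genE _ _ _ _ _).1 hu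
  rw [mem_genE]
  refine ⟨k, ?_⟩
  have h1 : ∀ (k : ℕ) (g : On n), (shiftE (vfD δ).toLinearMap (ev0 α) ^ k) (g * h) =
      ((shiftE E 0 ^ k) g) * h := by
    intro k
    induction k with
    | zero => intro g; simp
    | succ k ih =>
      intro g
      rw [pow_succ, Module.End.mul_apply, pow_succ, Module.End.mul_apply, ← ih]
      congr 1
      simp only [shiftE_apply, hEa, Derivation.coeFn_coe, Derivation.leibniz, smul_eq_mul, hα, map_zero,
        Algebra.smul_def, c]
      ring
  rw [h1]
  exact Ideal.mul_mem_right _ _ hk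

lemma transfer {n : ℕ} {Y : Fin n → On n} (h0 : ∀ i, ev0 (Y i) = 0)
    (h1 : LinearIndependent ℂ (fun i => lin (Y i))) (T : ℕ) (I : Ideal (MvPolynomial (Fin n) ℂ))
    (P : MvPolynomial (Fin n) ℂ)
    (hP : MvPolynomial.aeval Y P ∈ Ideal.map (MvPolynomial.aeval Y) I ⊔ mId n ^ T) :
    P ∈ I ⊔ MvPolynomial.idealOfVars (Fin n) ℂ ^ T := by
  have key : ∀ x ∈ Ideal.map (MvPolynomial.aeval Y) I, ∃ Q ∈ I, x - MvPolynomial.aeval Y Q ∈ mId n ^ T := by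
    intro x hx
    induction hx using Submodule.span_induction with
    | mem x hx =>
      obtain ⟨Q, hQ, rfl⟩ := hx
      exact ⟨Q, hQ, by simp⟩
    | zero => exact ⟨0, I.zero_mem, by simp⟩
    | add x y _ _ hx hy =>
      obtain ⟨Q, hQ, h2⟩ := hx
      obtain ⟨Q', hQ', h2'⟩ := hy
      refine ⟨Q + Q', I.add_mem hQ hQ', ?_⟩
      have := Ideal.add_mem _ h2 h2'
      convert this using 1
      rw [map_add]; ring
    | smul r x _ hx =>
      obtain ⟨Q, hQ, h2⟩ := hx
      obtain ⟨R, hR⟩ := exists_poly h0 (span_eq h0 h1) T r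
      refine ⟨R * Q, I.mul_mem_left _ hQ, ?_⟩
      have := Ideal.add_mem _ (Ideal.mul_mem_left _ r h2) (Ideal.mul_mem_right (MvPolynomial.aeval Y Q) _ hR)
      convert this using 1
      rw [map_mul, smul_eq_mul]; ring
  obtain ⟨x, hx, y, hy, hxy⟩ := Submodule.mem_sup.1 hP
  obtain ⟨Q, hQ, h2⟩ := key x hx
  have h3 : P - Q ∈ MvPolynomial.idealOfVars (Fin n) ℂ ^ T := by
    apply mem_pow_of_aeval h0 h1
    have := Ideal.add_mem _ h2 hy
    convert this using 1
    rw [map_sub, ← hxy]; ring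
  have := Submodule.add_mem_sup hQ h3
  simpa using this

lemma transfer_le {n : ℕ} {Y : Fin n → On n} (h0 : ∀ i, ev0 (Y i) = 0)
    (h1 : LinearIndependent ℂ (fun i => lin (Y i))) (N T : ℕ) (I : Ideal (MvPolynomial (Fin n) ℂ))
    (hI : mId n ^ N ≤ Ideal.map (MvPolynomial.aeval Y) I ⊔ mId n ^ T) :
    MvPolynomial.idealOfVars (Fin n) ℂ ^ N ≤ I ⊔ MvPolynomial.idealOfVars (Fin n) ℂ ^ T :=
  fun P hP => transfer h0 h1 T I P (hI (aeval_mem_pow h0 N hP))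

lemma pd_approx {n : ℕ} (Y : Fin n → On n) (l : Fin n) (T : ℕ) (g : On n) (P : MvPolynomial (Fin n) ℂ)
    (h : g - MvPolynomial.aeval Y P ∈ mId n ^ (T+1)) :
    pd l g - ∑ j, MvPolynomial.aeval Y (MvPolynomial.pderiv j P) * pd l (Y j) ∈ mId n ^ T := by
  have h1 := pd_mem_pow l T h
  have : pd l (g - MvPolynomial.aeval Y P) = pd l g - pd l (MvPolynomial.aeval Y P) := map_sub (pdD l) _ _
  rwa [this, pd_aeval] at h1

lemma jac_approx {n : ℕ} (Y : Fin n → On n) (T : ℕ) (g : On n) (P : MvPolynomial (Fin n) ℂ)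
    (h : g - MvPolynomial.aeval Y P ∈ mId n ^ (T+1)) :
    Jac n g ≤ Ideal.map (MvPolynomial.aeval Y) (Ideal.span (Set.range fun j => MvPolynomial.pderiv j P)) ⊔
      mId n ^ T := by
  rw [Jac, Ideal.span_le]
  rintro _ ⟨l, rfl⟩
  have h1 := pd_approx Y l T g P h
  have h2 : ∑ j, MvPolynomial.aeval Y (MvPolynomial.pderiv j P) * pd l (Y j) ∈
      Ideal.map (MvPolynomial.aeval Y) (Ideal.span (Set.range fun j => MvPolynomial.pderiv j P)) :=
    Ideal.sum_mem _ fun j _ => Ideal.mul_mem_right _ _ (Ideal.mem_map_of_mem _ (Ideal.subset_span ⟨j, rfl⟩))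
  have := Submodule.add_mem_sup h2 h1
  simpa using this

lemma span_approx {n : ℕ} (Y : Fin n → On n) (T : ℕ) (g : On n) (P : MvPolynomial (Fin n) ℂ)
    (h : g - MvPolynomial.aeval Y P ∈ mId n ^ (T+1)) :
    Ideal.span {g} ≤ Ideal.map (MvPolynomial.aeval Y) (Ideal.span {P}) ⊔ mId n ^ T := by
  rw [Ideal.span_singleton_le_iff_mem]
  have h1 : g - MvPolynomial.aeval Y P ∈ mId n ^ T := Ideal.pow_le_pow_right (Nat.le_succ T) h
  have := Submodule.add_mem_sup (Ideal.mem_map_of_mem (MvPolynomial.aeval Y)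
    (Ideal.mem_span_singleton_self P)) h1
  simpa using this

lemma minors_identity {R : Type*} [CommRing R] {n : ℕ} (a b x y : Fin n → R) :
    (∑ j, a j * x j) * (∑ k, b k * y k) - (∑ j, a j * y j) * (∑ k, b k * x k) =
      ∑ j, ∑ k, (a j * b k - a k * b j) * (x j * y k) := by
  simp only [sub_mul, Finset.sum_sub_distrib]
  congr 1
  · rw [Finset.sum_mul_sum]
    exact Finset.sum_congr rfl fun j _ => Finset.sum_congr rfl fun k _ => by ring
  · rw [Finset.sum_mul_sum, Finset.sum_comm]
    exact Finset.sum_congr rfl fun j _ => Finset.sum_congr rfl fun k _ => by ring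

lemma jmin_approx {n : ℕ} (Y : Fin n → On n) (T : ℕ) (f h : On n) (F G : MvPolynomial (Fin n) ℂ)
    (hF : f - MvPolynomial.aeval Y F ∈ mId n ^ (T+1)) (hG : h - MvPolynomial.aeval Y G ∈ mId n ^ (T+1)) :
    Jmin n f h ≤ Ideal.map (MvPolynomial.aeval Y) (Ideal.span (Set.range fun p : Fin n × Fin n =>
      MvPolynomial.pderiv p.1 F * MvPolynomial.pderiv p.2 G -
        MvPolynomial.pderiv p.2 F * MvPolynomial.pderiv p.1 G)) ⊔ mId n ^ T := by
  rw [Jmin, Ideal.span_le]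
  rintro _ ⟨⟨p, q⟩, rfl⟩
  set a : Fin n → On n := fun j => MvPolynomial.aeval Y (MvPolynomial.pderiv j F) with ha
  set b : Fin n → On n := fun j => MvPolynomial.aeval Y (MvPolynomial.pderiv j G) with hb
  have f1 := pd_approx Y p T f F hF
  have f2 := pd_approx Y q T f F hF
  have g1 := pd_approx Y p T h G hG
  have g2 := pd_approx Y q T h G hG
  change pd p f * pd q h - pd q f * pd p h ∈ _
  have h1 : (∑ j, a j * pd p (Y j)) * (∑ k, b k * pd q (Y k)) -
      (∑ j, a j * pd q (Y j)) * (∑ k, b k * pd p (Y k)) ∈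
      Ideal.map (MvPolynomial.aeval Y) (Ideal.span (Set.range fun p : Fin n × Fin n =>
      MvPolynomial.pderiv p.1 F * MvPolynomial.pderiv p.2 G -
        MvPolynomial.pderiv p.2 F * MvPolynomial.pderiv p.1 G)) := by
    rw [minors_identity]
    refine Ideal.sum_mem _ fun j _ => Ideal.sum_mem _ fun k _ => Ideal.mul_mem_right _ _ ?_
    have := Ideal.mem_map_of_mem (MvPolynomial.aeval Y) (Ideal.subset_span (Set.mem_range_self
      (f := fun p : Fin n × Fin n => MvPolynomial.pderiv p.1 F * MvPolynomial.pderiv p.2 G -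
        MvPolynomial.pderiv p.2 F * MvPolynomial.pderiv p.1 G) (j, k)))
    simpa only [map_sub, map_mul] using this
  have h2 : (pd p f * pd q h - pd q f * pd p h) - ((∑ j, a j * pd p (Y j)) * (∑ k, b k * pd q (Y k)) -
      (∑ j, a j * pd q (Y j)) * (∑ k, b k * pd p (Y k))) ∈ mId n ^ T := by
    have e := Ideal.sub_mem _
      (Ideal.add_mem _ (Ideal.mul_mem_right (pd q h) _ f1) (Ideal.mul_mem_left _ (∑ j, a j * pd p (Y j)) g2))
      (Ideal.add_mem _ (Ideal.mul_mem_right (pd p h) _ f2) (Ideal.mul_mem_left _ (∑ j, a j * pd q (Y j)) g1))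
    convert e using 1
    ring
  have := Submodule.add_mem_sup h1 h2
  simpa using this

lemma jac_mul {n : ℕ} (c h : On n) : Jac n (c * h) ⊔ Ideal.span {c * h} ≤ Jac n h ⊔ Ideal.span {h} := by
  have hh : h ∈ Jac n h ⊔ Ideal.span {h} := (le_sup_right : _ ≤ Jac n h ⊔ Ideal.span {h}) (Ideal.mem_span_singleton_self h)
  refine sup_le ?_ ?_
  · rw [Jac, Ideal.span_le]
    rintro _ ⟨l, rfl⟩
    have : pd l (c * h) = c * pd l h + h * pd l c := (pdD l).leibniz c h
    change pd l (c * h) ∈ _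
    rw [this]
    refine Ideal.add_mem _ (Ideal.mul_mem_left _ _ ?_) (Ideal.mul_mem_right _ _ hh)
    exact (le_sup_left : _ ≤ Jac n h ⊔ Ideal.span {h}) (Ideal.subset_span ⟨l, rfl⟩)
  · rw [Ideal.span_singleton_le_iff_mem]
    exact Ideal.mul_mem_left _ _ hh

lemma jmin_mul {n : ℕ} (c f h : On n) : Jmin n f (c * h) ⊔ Ideal.span {c * h} ≤ Jmin n f h ⊔ Ideal.span {h} := by
  have hh : h ∈ Jmin n f h ⊔ Ideal.span {h} := (le_sup_right : _ ≤ Jmin n f h ⊔ Ideal.span {h}) (Ideal.mem_span_singleton_self h)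
  refine sup_le ?_ ?_
  · rw [Jmin, Ideal.span_le]
    rintro _ ⟨⟨p, q⟩, rfl⟩
    have e : ∀ l, pd l (c * h) = c * pd l h + h * pd l c := fun l => (pdD l).leibniz c h
    change pd p f * pd q (c * h) - pd q f * pd p (c * h) ∈ _
    rw [e, e]
    have : pd p f * (c * pd q h + h * pd q c) - pd q f * (c * pd p h + h * pd p c) =
      c * (pd p f * pd q h - pd q f * pd p h) + (pd p f * pd q c - pd q f * pd p c) * h := by ring
    rw [this]
    refine Ideal.add_mem _ (Ideal.mul_mem_left _ _ ?_) (Ideal.mul_mem_left _ _ hh)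
    exact (le_sup_left : _ ≤ Jmin n f h ⊔ Ideal.span {h}) (Ideal.subset_span ⟨(p, q), rfl⟩)
  · rw [Ideal.span_singleton_le_iff_mem]
    exact Ideal.mul_mem_left _ _ hh

lemma poly_sq {n : ℕ} {Y : Fin n → On n} (h0 : ∀ i, ev0 (Y i) = 0)
    (h1 : LinearIndependent ℂ (fun i => lin (Y i))) (K : ℕ) (hK : 2 ≤ K) (g : On n) (P : MvPolynomial (Fin n) ℂ)
    (hg : g ∈ mId n ^ 2) (h : g - MvPolynomial.aeval Y P ∈ mId n ^ K) :
    P ∈ MvPolynomial.idealOfVars (Fin n) ℂ ^ 2 := by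
  apply mem_pow_of_aeval h0 h1
  have := Ideal.sub_mem _ hg (Ideal.pow_le_pow_right hK h)
  simpa using this

lemma f_mem_genE {n : ℕ} {δ : Fin n → On n} (hδ : ∀ i, δ i ∈ mId n) (K : ℕ) (f : On n) (hf : vfD δ f = f) :
    f ∈ genE (mU n K) (vfD δ).toLinearMap (vfD_stable hδ K) ((1 : ℚ) : ℂ) := by
  apply mem_genE_of_shift
  simp [shiftE_apply, hf]

lemma two_le_n {n : ℕ} {δ : Fin n → On n} (hδ : ∀ i, δ i ∈ mId n) (f : On n) (hf : vfD δ f = f)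
    (hf2 : f ∈ mId n ^ 2) (w : Fin n → ℚ) (hw : EigsEq δ w) (hneg : ∃ i, w i ≤ 0) (N : ℕ)
    (hN : mId n ^ N ≤ Jac n f) : 2 ≤ n := by
  obtain ⟨Y, v, h0, h1, h2, ⟨i0, hv⟩⟩ := exists_coords δ hδ (N+2) (by omega) w hw hneg
  obtain ⟨F, d, -, hF, hFf⟩ := extract_wt δ hδ (N+2) Y v h0 h1 h2 _ f (f_mem_genE hδ _ f hf)
  have a1 := transfer_le h0 h1 N (N+1) _ (hN.trans (jac_approx Y (N+1) f F hFf))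
  have c1 := card_nonpos_le v F N 1 one_pos (hF 1 rfl) (poly_sq h0 h1 (N+2) (by omega) f F hf2 hFf)
    (a1.trans (sup_le_sup_right le_sup_left _))
  have c2 : 0 < (Finset.univ.filter (fun i => v i ≤ 0)).card := Finset.card_pos.2 ⟨i0, by simpa using hv⟩
  obtain ⟨i1, hi1⟩ := Finset.card_pos.1 (c2.trans_le c1)
  have hi1' : 1 ≤ v i1 := by simpa using hi1
  have hne : i0 ≠ i1 := by
    rintro rfl
    linarith
  by_contra hlt
  have := i0.2
  have := i1.2
  exact hne (Fin.ext (by omega))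

lemma formal_contra {n : ℕ} {δ : Fin n → On n} (hδ : ∀ i, δ i ∈ mId n) (f : On n) (hf : vfD δ f = f)
    (hf2 : f ∈ mId n ^ 2) (w : Fin n → ℚ) (hw : EigsEq δ w) (hneg : ∃ i, w i ≤ 0) (N : ℕ)
    (h α : On n) (hα : vfD δ h = α * h) (hh2 : h ∈ mId n ^ 2)
    (hN1 : mId n ^ N ≤ Jac n f) (hN2 : mId n ^ N ≤ Jac n h ⊔ Ideal.span {h})
    (hN3 : mId n ^ N ≤ Jmin n f h ⊔ Ideal.span {h}) : False := by
  obtain ⟨Y, v, h0, h1, h2, hv⟩ := exists_coords δ hδ (N+2) (by omega) w hw hneg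
  obtain ⟨F, d, -, hF, hFf⟩ := extract_wt δ hδ (N+2) Y v h0 h1 h2 _ f (f_mem_genE hδ _ f hf)
  obtain ⟨u, hu, huh⟩ := exists_unit hδ (N+2) (by omega) h α hα
  obtain ⟨G, d, hG, -, hGh⟩ := extract_wt δ hδ (N+2) Y v h0 h1 h2 _ (u * h) huh
  obtain ⟨c, hc⟩ := (isUnit_of_ev0 u hu).exists_left_inv
  have hch : c * (u * h) = h := by rw [← mul_assoc, hc, one_mul]
  have a1 := transfer_le h0 h1 N (N+1) _ (hN1.trans (jac_approx Y (N+1) f F hFf))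
  have b2 := jac_mul c (u * h)
  have b3 := jmin_mul c f (u * h)
  rw [hch] at b2 b3
  have a2 := transfer_le h0 h1 N (N+1) _ ((hN2.trans b2).trans
    ((sup_le_sup (jac_approx Y (N+1) (u * h) G hGh) (span_approx Y (N+1) (u * h) G hGh)).trans
      (by rw [Ideal.map_sup]; exact sup_le (sup_le_sup_right le_sup_left _) (sup_le_sup_right le_sup_right _))))
  have a3 := transfer_le h0 h1 N (N+1) _ ((hN3.trans b3).trans
    ((sup_le_sup (jmin_approx Y (N+1) f (u * h) F G hFf hGh) (span_approx Y (N+1) (u * h) G hGh)).trans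
      (by rw [Ideal.map_sup]; exact sup_le (sup_le_sup_right le_sup_left _) (sup_le_sup_right le_sup_right _))))
  exact poly_contra v hv F G d N (hF 1 rfl) hG (poly_sq h0 h1 (N+2) (by omega) f F hf2 hFf)
    (poly_sq h0 h1 (N+2) (by omega) (u * h) G (Ideal.mul_mem_left _ _ hh2) hGh) a1 a2 a3

section compop
variable {S : Type*} [TopologicalSpace S] [CompactSpace S] {E : Type*} [NormedAddCommGroup E] [NormedSpace ℂ E]

/-- pointwise extension of a multilinear map to continuous functions -/
def ptw {k : ℕ} (m : ContinuousMultilinearMap ℂ (fun _ : Fin k => E) ℂ) :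
    ContinuousMultilinearMap ℂ (fun _ : Fin k => C(S, E)) C(S, ℂ) :=
  MultilinearMap.mkContinuous
    { toFun := fun f => ⟨fun s => m fun i => f i s, m.cont.comp (continuous_pi fun i => (f i).continuous)⟩
      map_update_add' := by
        intro _ f i x y
        ext s
        have h : ∀ z : C(S, E), (fun j => (Function.update f i z j) s) = Function.update (fun j => f j s) i (z s) := by
          intro z
          ext j
          by_cases hj : j = i
          · subst hj; simp
          · simp [hj]
        simp only [ContinuousMap.coe_mk, ContinuousMap.add_apply, h]
        convert m.map_update_add (fun j => f j s) i (x s) (y s)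
      map_update_smul' := by
        intro _ f i c x
        ext s
        have h : ∀ z : C(S, E), (fun j => (Function.update f i z j) s) = Function.update (fun j => f j s) i (z s) := by
          intro z
          ext j
          by_cases hj : j = i
          · subst hj; simp
          · simp [hj]
        simp only [ContinuousMap.coe_mk, ContinuousMap.smul_apply, h]
        convert m.map_update_smul (fun j => f j s) i c (x s) }
    ‖m‖ (by
      intro f
      rw [ContinuousMap.norm_le _ (by positivity)]
      intro s
      refine (m.le_opNorm _).trans ?_
      gcongr with i
      exact (f i).norm_coe_le_norm s)

lemma ptw_apply {k : ℕ} (m : ContinuousMultilinearMap ℂ (fun _ : Fin k => E) ℂ) (f : Fin k → C(S, E)) (s : S) :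
    ptw m f s = m fun i => f i s := rfl

lemma norm_ptw_le {k : ℕ} (m : ContinuousMultilinearMap ℂ (fun _ : Fin k => E) ℂ) :
    ‖(ptw m : ContinuousMultilinearMap ℂ (fun _ : Fin k => C(S, E)) C(S, ℂ))‖ ≤ ‖m‖ :=
  MultilinearMap.mkContinuous_norm_le _ (norm_nonneg _) _

/-- Composition operators are analytic. -/
lemma compop_analytic {H : E → ℂ} {p : FormalMultilinearSeries ℂ E ℂ} {R : ENNReal}
    (hp : HasFPowerSeriesOnBall H p 0 R) :
    ∃ Φ : C(S, E) → C(S, ℂ), (∀ f ∈ Metric.eball (0 : C(S, E)) R, AnalyticAt ℂ Φ f) ∧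
      ∀ f ∈ Metric.eball (0 : C(S, E)) R, ∀ s, Φ f s = H (f s) := by
  let P : FormalMultilinearSeries ℂ C(S, E) C(S, ℂ) := fun k => ptw (p k)
  have hrad : p.radius ≤ P.radius := by
    refine FormalMultilinearSeries.radius_le_of_le fun k => ?_
    exact norm_ptw_le _
  have hR : R ≤ P.radius := hp.r_le.trans hrad
  have hP := (P.hasFPowerSeriesOnBall (hp.r_pos.trans_le hR)).mono hp.r_pos hR
  refine ⟨P.sum, fun f hf => hP.analyticAt_of_mem hf, fun f hf s => ?_⟩
  have h1 := hP.hasSum hf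
  rw [zero_add] at h1
  have h2 := ((ContinuousMap.evalCLM ℂ s).hasSum h1)
  have hfs : f s ∈ Metric.eball (0 : E) R := by
    rw [Metric.mem_eball, edist_zero_right] at hf ⊢
    refine lt_of_le_of_lt ?_ hf
    simp only [enorm_le_iff_norm_le]
    exact f.norm_coe_le_norm s
  have h3 := hp.hasSum hfs
  rw [zero_add] at h3
  exact h2.unique h3
end compop

section slice

lemma slice_lemma (u w : ℂ → ℂ) (r : ℝ) (hr : 0 < r) (hu : AnalyticOnNhd ℂ u (Metric.closedBall 0 r))
    (hw : AnalyticOnNhd ℂ w (Metric.closedBall 0 r)) (hws : ∀ ζ ∈ Metric.sphere (0 : ℂ) r, w ζ ≠ 0)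
    (hb : ∀ ζ ∈ Metric.closedBall (0 : ℂ) r, ∃ C : ℝ, ∀ᶠ ξ in 𝓝 ζ, ‖u ξ‖ ≤ C * ‖w ξ‖) (hw0 : w 0 ≠ 0) :
    Real.circleAverage (fun ζ => u ζ / w ζ) 0 r = u 0 / w 0 := by
  let k : ℂ → ℂ := fun ζ => limUnder (𝓝[≠] ζ) (fun ζ => u ζ / w ζ)
  have hk1 : ∀ ζ, AnalyticAt ℂ u ζ → AnalyticAt ℂ w ζ → w ζ ≠ 0 → k ζ = u ζ / w ζ := by
    intro ζ h1 h2 h3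
    have hc : ContinuousAt (fun ζ => u ζ / w ζ) ζ := h1.continuousAt.div h2.continuousAt h3
    exact (hc.tendsto.mono_left nhdsWithin_le_nhds).limUnder_eq
  have hk2 : ∀ ζ ∈ Metric.closedBall (0 : ℂ) r, DifferentiableAt ℂ k ζ := by
    intro ζ hζ
    have hne : ∀ᶠ ξ in 𝓝[≠] ζ, w ξ ≠ 0 := by
      rcases (hw ζ hζ).eventually_eq_zero_or_eventually_ne_zero with h | h
      · exfalso
        have h1 := hw.eqOn_zero_of_preconnected_of_eventuallyEq_zero
          (convex_closedBall 0 r).isPreconnected hζ h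
        have h2 : (r : ℂ) ∈ Metric.sphere (0 : ℂ) r := by simp [hr.le]
        exact hws _ h2 (h1 (Metric.sphere_subset_closedBall h2))
      · exact h
    obtain ⟨C, hC⟩ := hb ζ hζ
    have hall := ((hu ζ hζ).eventually_analyticAt.and ((hw ζ hζ).eventually_analyticAt.and
      (hC.and (eventually_nhdsWithin_iff.1 hne))))
    obtain ⟨s, hs, hso, hζs⟩ := eventually_nhds_iff.1 hall
    have hsn : s ∈ 𝓝 ζ := hso.mem_nhds hζs
    have hd := Complex.differentiableOn_update_limUnder_of_bddAbove (f := fun ζ => u ζ / w ζ) hsn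
      (fun ξ hξ => by
        have := hs ξ hξ.1
        exact (this.1.differentiableAt.div this.2.1.differentiableAt (this.2.2.2 hξ.2)).differentiableWithinAt)
      (by
        refine ⟨C, ?_⟩
        rintro _ ⟨ξ, hξ, rfl⟩
        have := hs ξ hξ.1
        have h3 := this.2.2.2 hξ.2
        simp only [Function.comp_apply, norm_div]
        rw [div_le_iff₀ (norm_pos_iff.2 h3)]
        exact this.2.2.1)
    refine (hd.differentiableAt hsn).congr_of_eventuallyEq ?_
    filter_upwards [hsn] with ξ hξ
    by_cases h : ξ = ζ
    · subst h; simp [k]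
    · rw [Function.update_of_ne h]
      exact hk1 ξ (hs ξ hξ).1 (hs ξ hξ).2.1 ((hs ξ hξ).2.2.2 h)
  have h0 : (0 : ℂ) ∈ Metric.closedBall (0 : ℂ) r := by simp [hr.le]
  rw [← hk1 0 (hu 0 h0) (hw 0 h0) hw0]
  have hkd : DiffContOnCl ℂ k (Metric.ball 0 |r|) := by
    rw [abs_of_pos hr]
    apply DifferentiableOn.diffContOnCl
    rw [closure_ball _ hr.ne']
    exact fun ζ hζ => (hk2 ζ hζ).differentiableWithinAt
  rw [← hkd.circleAverage]
  apply Real.circleAverage_congr_sphere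
  intro ζ hζ
  rw [abs_of_pos hr] at hζ
  have hζ' := Metric.sphere_subset_closedBall hζ
  exact (hk1 ζ (hu ζ hζ') (hw ζ hζ') (hws ζ hζ)).symm

end slice

lemma local_bound {E : Type*} [NormedAddCommGroup E] [NormedSpace ℂ E] [CompleteSpace E] {H g : E → ℂ} {x0 : E} (hH : AnalyticAt ℂ H x0)
    (hg : AnalyticAt ℂ g x0) (hz : ∀ᶠ x in 𝓝 x0, H x = 0 → g x = 0) (hd : fderiv ℂ H x0 ≠ 0) :
    ∃ C : ℝ, ∀ᶠ y in 𝓝 x0, ‖g y‖ ≤ C * ‖H y‖ := by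
  by_cases h0 : H x0 = 0
  swap
  · have hc : ContinuousAt (fun y => ‖g y‖ / ‖H y‖) x0 :=
      hg.continuousAt.norm.div hH.continuousAt.norm (norm_ne_zero_iff.2 h0)
    refine ⟨‖g x0‖ / ‖H x0‖ + 1, ?_⟩
    filter_upwards [hc.eventually_lt continuousAt_const (lt_add_one _), hH.continuousAt.eventually_ne h0] with y h1 h2
    exact (div_le_iff₀ (norm_pos_iff.2 h2)).1 h1.le
  have hs := hH.hasStrictFDerivAt
  have hsurj : (fderiv ℂ H x0).range = ⊤ := LinearMap.range_eq_top.2 (LinearMap.surjective (by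
      intro h
      apply hd
      ext x
      exact congrArg (fun l : E →ₗ[ℂ] ℂ => l x) h))
  let inv := (fderiv ℂ H x0).nonlinearRightInverseOfSurjective hsurj
  have hipos : 0 < inv.nnnorm := (fderiv ℂ H x0).nonlinearRightInverseOfSurjective_nnnorm_pos hsurj
  set c : NNReal := inv.nnnorm⁻¹ / 2 with hc
  have hcpos : 0 < c := by positivity
  obtain ⟨s, hs1, hs2⟩ := hs.approximates_deriv_on_nhds (c := c) (Or.inr hcpos)
  obtain ⟨L, t, ht, hL⟩ := hg.hasStrictFDerivAt.exists_lipschitzOnWith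
  obtain ⟨ε, hε, hball⟩ := Metric.mem_nhds_iff.1 (inter_mem (inter_mem hs1 ht) hz)
  have hcR : ((inv.nnnorm : ℝ)⁻¹ - c) = c := by
    rw [hc]; push_cast; ring
  have hcpos' : (0 : ℝ) < c := hcpos
  have hcontH : ∀ᶠ y in 𝓝 x0, ‖H y‖ / c < ε / 2 := by
    have : ContinuousAt (fun y => ‖H y‖ / c) x0 := hH.continuousAt.norm.div_const _
    refine this.eventually_lt continuousAt_const ?_
    rw [h0]; simpa using hε
  refine ⟨L / c, ?_⟩
  filter_upwards [hcontH, Metric.ball_mem_nhds x0 (half_pos hε)] with y hy1 hy2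
  have hsub : Metric.closedBall y (‖H y‖ / c) ⊆ Metric.ball x0 ε := by
    intro x hx
    rw [Metric.mem_closedBall] at hx
    rw [Metric.mem_ball] at hy2 ⊢
    calc dist x x0 ≤ dist x y + dist y x0 := dist_triangle _ _ _
      _ < ε := by linarith
  have hsur := hs2.surjOn_closedBall_of_nonlinearRightInverse inv (ε := ‖H y‖ / c) (b := y) (by positivity)
    (hsub.trans (hball.trans (fun x hx => hx.1.1)))
  rw [hcR, mul_div_cancel₀ _ hcpos'.ne'] at hsur
  obtain ⟨x, hx, hx0⟩ := hsur (show (0 : ℂ) ∈ Metric.closedBall (H y) ‖H y‖ by simp)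
  have hxb := hball (hsub hx)
  have hyb := hball (Metric.ball_subset_ball (by linarith) hy2)
  have hgx : g x = 0 := hxb.2 hx0
  have := hL.dist_le_mul y hyb.1.2 x hxb.1.2
  rw [hgx, dist_zero_right] at this
  calc ‖g y‖ ≤ L * dist y x := this
    _ ≤ L * (‖H y‖ / c) := by
      gcongr
      rw [dist_comm]; exact hx
    _ = L / c * ‖H y‖ := by ring

lemma crit_isolated {n : ℕ} {H : (Fin n → ℂ) → ℂ} (hH : AnalyticAt ℂ H 0) (N : ℕ)
    (hN : mId n ^ N ≤ Jac n (mkOn H hH)) : ∀ᶠ x in 𝓝 (0 : Fin n → ℂ), fderiv ℂ H x = 0 → x = 0 := by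
  have key : ∀ i : Fin n, ∀ᶠ x in 𝓝 (0 : Fin n → ℂ), fderiv ℂ H x = 0 → x i = 0 := by
    intro i
    have hmem : ∀ g ∈ Jac n (mkOn H hH), ∃ k, ∃ hk : AnalyticAt ℂ k 0, g = mkOn k hk ∧
        ∀ᶠ x in 𝓝 (0 : Fin n → ℂ), fderiv ℂ H x = 0 → k x = 0 := by
      intro g hg
      rw [Jac] at hg
      induction hg using Submodule.span_induction with
      | mem x hx =>
        obtain ⟨j, rfl⟩ := hx
        refine ⟨_, _, pd_mkOn j hH, Filter.Eventually.of_forall fun x hx => ?_⟩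
        rw [hx]; rfl
      | zero => exact ⟨_, _, zero_mkOn, Filter.Eventually.of_forall fun x hx => rfl⟩
      | add a b _ _ ha hb =>
        obtain ⟨k, hk, rfl, h1⟩ := ha
        obtain ⟨l, hl, rfl, h2⟩ := hb
        refine ⟨_, _, mkOn_add hk hl, ?_⟩
        filter_upwards [h1, h2] with x a1 a2 hx
        rw [a1 hx, a2 hx, add_zero]
      | smul a b _ hb =>
        obtain ⟨l, hl, rfl, h2⟩ := hb
        obtain ⟨k, hk, rfl⟩ := exists_mkOn a
        refine ⟨_, _, mkOn_mul hk hl, ?_⟩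
        filter_upwards [h2] with x a2 hx
        rw [a2 hx, mul_zero]
    have hc : coordG i ^ (N+1) ∈ Jac n (mkOn H hH) := by
      rw [pow_succ]
      exact Ideal.mul_mem_right _ _ (hN (Ideal.pow_mem_pow ((mem_mId _).2 (ev0_coordG i)) N))
    obtain ⟨k, hk, h1, h2⟩ := hmem _ hc
    have hpow : ∀ m : ℕ, (coordG i : On n) ^ m = mkOn (fun x => x i ^ m) ((coord_analytic i).pow m) := by
      intro m
      induction m with
      | zero => simp only [pow_zero]; rfl
      | succ m ih => rw [pow_succ, ih, coordG_eq, mkOn_mul]; rfl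
    rw [hpow, mkOn_eq_iff] at h1
    filter_upwards [h1, h2] with x a1 a2 hx
    have : x i ^ (N+1) = 0 := by rw [a1, a2 hx]
    exact pow_eq_zero_iff (by omega) |>.1 this
  filter_upwards [Filter.eventually_all.2 key] with x hx h
  funext i
  exact hx i h

lemma avg_analytic {E : Type*} [NormedAddCommGroup E] [NormedSpace ℂ E] {H g : E → ℂ}
    {p p' : FormalMultilinearSeries ℂ E ℂ} {R : ℝ} (hR : 0 < R)
    (hp : HasFPowerSeriesOnBall H p 0 (ENNReal.ofReal R)) (hp' : HasFPowerSeriesOnBall g p' 0 (ENNReal.ofReal R))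
    (v : E) (r : ℝ) (hr : 0 < r) (hrv : r * ‖v‖ < R) (hs : ∀ ζ ∈ Metric.sphere (0 : ℂ) r, H (ζ • v) ≠ 0) :
    ∃ q : E → ℂ, AnalyticAt ℂ q 0 ∧ ∀ᶠ z in 𝓝 (0 : E), (∀ ζ ∈ Metric.sphere (0 : ℂ) r, H (z + ζ • v) ≠ 0) ∧
      q z = Real.circleAverage (fun ζ => g (z + ζ • v) / H (z + ζ • v)) 0 r := by
  let S := Metric.sphere (0 : ℂ) r
  have : CompactSpace S := isCompact_iff_compactSpace.1 (isCompact_sphere _ _)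
  obtain ⟨ΦH, hH1, hH2⟩ := compop_analytic (S := S) hp
  obtain ⟨Φg, hg1, hg2⟩ := compop_analytic (S := S) hp'
  let ι : C(S, E) := ⟨fun s => (s : ℂ) • v, by fun_prop⟩
  have hιn : ‖ι‖ < R := by
    refine lt_of_le_of_lt ((ContinuousMap.norm_le _ (by positivity)).2 fun s => ?_) hrv
    change ‖(s : ℂ) • v‖ ≤ _
    rw [norm_smul, mem_sphere_zero_iff_norm.1 s.2]
  let cst : E →L[ℂ] C(S, E) := LinearMap.mkContinuous
    { toFun := fun z => ContinuousMap.const S z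
      map_add' := fun a b => rfl
      map_smul' := fun a b => rfl } 1 (fun z => by
        rw [one_mul]
        exact (ContinuousMap.norm_le _ (norm_nonneg _)).2 fun s => le_rfl)
  have hcst : ∀ z s, cst z s = z := fun z s => rfl
  let A : E → C(S, E) := fun z => cst z + ι
  have hA : AnalyticAt ℂ A 0 := (cst.analyticAt 0).add analyticAt_const
  have hA0 : A 0 = ι := by simp [A]
  have hAs : ∀ z s, A z s = z + (s : ℂ) • v := fun z s => rfl
  have hmem : ∀ᶠ z in 𝓝 (0 : E), A z ∈ Metric.eball (0 : C(S, E)) (ENNReal.ofReal R) := by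
    refine hA.continuousAt.eventually_mem (Metric.isOpen_eball.mem_nhds ?_)
    rw [hA0, Metric.eball_ofReal, mem_ball_zero_iff]
    exact hιn
  have hι : A 0 ∈ Metric.eball (0 : C(S, E)) (ENNReal.ofReal R) := hmem.self_of_nhds
  have hFH : AnalyticAt ℂ (fun z => ΦH (A z)) 0 := (hH1 _ hι).comp hA
  have hFg : AnalyticAt ℂ (fun z => Φg (A z)) 0 := (hg1 _ hι).comp hA
  have hunit : IsUnit (ΦH (A 0)) := by
    rw [ContinuousMap.isUnit_iff_forall_ne_zero]
    intro s
    rw [hH2 _ hι, hAs, zero_add]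
    exact hs s s.2
  have hunits : ∀ᶠ z in 𝓝 (0 : E), IsUnit (ΦH (A z)) :=
    hFH.continuousAt.eventually_mem (Units.isOpen.mem_nhds hunit)
  have hinv : AnalyticAt ℂ (fun z => Ring.inverse (ΦH (A z))) 0 := by
    obtain ⟨u, hu⟩ := hunit
    have h1 : AnalyticAt ℂ (Ring.inverse : C(S, ℂ) → C(S, ℂ)) (ΦH (A 0)) := by
      rw [← hu]; exact analyticAt_inverse u
    exact AnalyticAt.comp (g := (Ring.inverse : C(S, ℂ) → C(S, ℂ))) (f := fun z => ΦH (A z)) h1 hFH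
  let e : ℝ → S := fun θ => ⟨circleMap 0 r θ, circleMap_mem_sphere 0 hr.le θ⟩
  have he : Continuous e := (continuous_circleMap 0 r).subtype_mk _
  let L : C(S, ℂ) →L[ℂ] ℂ := LinearMap.mkContinuous
    { toFun := fun f => (2 * Real.pi : ℝ)⁻¹ • ∫ θ in (0 : ℝ)..2 * Real.pi, f (e θ)
      map_add' := fun a b => by
        have ha : IntervalIntegrable (fun θ => a (e θ)) MeasureTheory.volume 0 (2 * Real.pi) :=
          (a.continuous.comp he).intervalIntegrable _ _
        have hb : IntervalIntegrable (fun θ => b (e θ)) MeasureTheory.volume 0 (2 * Real.pi) :=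
          (b.continuous.comp he).intervalIntegrable _ _
        rw [← smul_add, ← intervalIntegral.integral_add ha hb]
        rfl
      map_smul' := fun c b => by
        simp only [RingHom.id_apply, ContinuousMap.smul_apply, intervalIntegral.integral_smul]
        rw [smul_comm] } 1 (fun f => by
        have h1 := intervalIntegral.norm_integral_le_of_norm_le_const (a := 0) (b := 2 * Real.pi)
          (f := fun θ => f (e θ)) (C := ‖f‖) (fun θ _ => f.norm_coe_le_norm _)
        change ‖(2 * Real.pi : ℝ)⁻¹ • ∫ θ in (0 : ℝ)..2 * Real.pi, f (e θ)‖ ≤ _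
        rw [norm_smul, norm_inv, Real.norm_of_nonneg Real.two_pi_pos.le, one_mul]
        rw [sub_zero, abs_of_pos Real.two_pi_pos] at h1
        rw [inv_mul_le_iff₀ Real.two_pi_pos]
        linarith)
  refine ⟨fun z => L (Φg (A z) * Ring.inverse (ΦH (A z))), (L.analyticAt _).comp (hFg.mul hinv), ?_⟩
  filter_upwards [hmem, hunits] with z hz hu
  have hne : ∀ ζ ∈ Metric.sphere (0 : ℂ) r, H (z + ζ • v) ≠ 0 := by
    intro ζ hζ
    have := (ContinuousMap.isUnit_iff_forall_ne_zero _).1 hu ⟨ζ, hζ⟩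
    rwa [hH2 _ hz, hAs] at this
  refine ⟨hne, ?_⟩
  rw [Real.circleAverage_def]
  change (2 * Real.pi : ℝ)⁻¹ • (∫ θ in (0 : ℝ)..2 * Real.pi, (Φg (A z) * Ring.inverse (ΦH (A z))) (e θ)) = _
  congr 1
  refine intervalIntegral.integral_congr fun θ _ => ?_
  have h1 : (ΦH (A z) * Ring.inverse (ΦH (A z))) (e θ) = 1 := by
    rw [Ring.mul_inverse_cancel _ hu]; rfl
  rw [ContinuousMap.mul_apply, hH2 _ hz, hAs] at h1
  change (Φg (A z)) (e θ) * (Ring.inverse (ΦH (A z))) (e θ) = _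
  rw [hg2 _ hz, hAs, eq_div_iff (hne _ (e θ).2), mul_assoc,
    mul_comm (Ring.inverse (ΦH (A z)) (e θ)), h1, mul_one]

lemma exists_slice {E : Type*} [NormedAddCommGroup E] [NormedSpace ℂ E] {H : E → ℂ} {R : ℝ} (hR : 0 < R)
    (hH : AnalyticOnNhd ℂ H (Metric.ball 0 R)) (hne : ∃ v ∈ Metric.ball (0 : E) R, H v ≠ 0) (hv0 : H 0 = 0) :
    ∃ (v : E) (r : ℝ), v ≠ 0 ∧ 0 < r ∧ r * ‖v‖ < R / 2 ∧ ∀ ζ ∈ Metric.sphere (0 : ℂ) r, H (ζ • v) ≠ 0 := by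
  obtain ⟨v, hv, hHv⟩ := hne
  have hvne : v ≠ 0 := by rintro rfl; exact hHv hv0
  have hvp : 0 < ‖v‖ := norm_pos_iff.2 hvne
  have hv' : ‖v‖ < R := mem_ball_zero_iff.1 hv
  let u : ℂ → ℂ := fun ζ => H (ζ • v)
  have hmem : ∀ ζ ∈ Metric.ball (0 : ℂ) (R / ‖v‖), ζ • v ∈ Metric.ball (0 : E) R := by
    intro ζ hζ
    rw [mem_ball_zero_iff] at hζ ⊢
    rw [norm_smul]
    exact (lt_div_iff₀ hvp).1 hζ
  have hu : AnalyticOnNhd ℂ u (Metric.ball 0 (R / ‖v‖)) := by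
    intro ζ hζ
    have h1 : AnalyticAt ℂ (fun ζ : ℂ => ζ • v) ζ := analyticAt_id.smul analyticAt_const
    exact AnalyticAt.comp (g := H) (f := fun ζ : ℂ => ζ • v) (hH _ (hmem ζ hζ)) h1
  have h0 : (0 : ℂ) ∈ Metric.ball (0 : ℂ) (R / ‖v‖) := Metric.mem_ball_self (by positivity)
  have h1 : (1 : ℂ) ∈ Metric.ball (0 : ℂ) (R / ‖v‖) := by
    rw [mem_ball_zero_iff, norm_one, lt_div_iff₀ hvp]; linarith
  have hpc : IsPreconnected (Metric.ball (0 : ℂ) (R / ‖v‖)) := (convex_ball _ _).isPreconnected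
  have hev : ∀ᶠ ζ in 𝓝[≠] (0 : ℂ), u ζ ≠ 0 := by
    rcases (hu 0 h0).eventually_eq_zero_or_eventually_ne_zero with h | h
    · exfalso
      have := hu.eqOn_zero_of_preconnected_of_eventuallyEq_zero hpc h0 h h1
      simp only [u, one_smul] at this
      exact hHv this
    · exact h
  rw [eventually_nhdsWithin_iff, Metric.eventually_nhds_iff] at hev
  obtain ⟨ε, hε, hb⟩ := hev
  refine ⟨v, min (ε / 2) (R / ‖v‖ / 4), hvne, by positivity, ?_, ?_⟩
  · have : min (ε / 2) (R / ‖v‖ / 4) * ‖v‖ ≤ (R / ‖v‖ / 4) * ‖v‖ := by gcongr; exact min_le_right _ _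
    have h2 : (R / ‖v‖ / 4) * ‖v‖ = R / 4 := by field_simp
    linarith
  · intro ζ hζ
    have hn : ‖ζ‖ = min (ε / 2) (R / ‖v‖ / 4) := mem_sphere_zero_iff_norm.1 hζ
    refine hb (y := ζ) ?_ ?_
    · rw [dist_zero_right, hn]
      exact (min_le_left _ _).trans_lt (by linarith)
    · intro h
      rw [Set.mem_singleton_iff] at h
      rw [h, norm_zero] at hn
      have : 0 < min (ε / 2) (R / ‖v‖ / 4) := by positivity
      linarith

lemma dense_compl_line {n : ℕ} (hn : 2 ≤ n) (v : Fin n → ℂ) : Dense (((ℂ ∙ v : Submodule ℂ (Fin n → ℂ)) : Set (Fin n → ℂ))ᶜ) := by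
  rw [← interior_eq_empty_iff_dense_compl]
  by_contra h
  have htop := Submodule.eq_top_of_nonempty_interior' (ℂ ∙ v) (Set.nonempty_iff_ne_empty.2 h)
  have h1 := finrank_span_le_card (R := ℂ) ({v} : Set (Fin n → ℂ))
  rw [htop, finrank_top] at h1
  simp at h1
  omega

lemma hartogs {n : ℕ} (hn : 2 ≤ n) {H : (Fin n → ℂ) → ℂ} (hH : AnalyticAt ℂ H 0) (hH0 : H 0 = 0) (N : ℕ)
    (hN : mId n ^ N ≤ Jac n (mkOn H hH)) (g : On n) (hg : g ∈ IX n (H ⁻¹' {0})) :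
    ∃ k : On n, g = k * mkOn H hH := by
  obtain ⟨G, hG, rfl⟩ := exists_mkOn g
  rw [mem_IX] at hg
  have hcrit := crit_isolated hH N hN
  obtain ⟨p, R1, hp⟩ := id hH
  obtain ⟨p', R2, hp'⟩ := id hG
  obtain ⟨R0, hR0, hb⟩ := Metric.eventually_nhds_iff.1 (hcrit.and hg)
  obtain ⟨R, hR, hRR0, hR1, hR2⟩ : ∃ R : ℝ, 0 < R ∧ R ≤ R0 ∧ ENNReal.ofReal R ≤ R1 ∧ ENNReal.ofReal R ≤ R2 := by
    have hpos : 0 < min R1 R2 := lt_min hp.r_pos hp'.r_pos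
    have hlim : Tendsto (fun R : ℝ => ENNReal.ofReal R) (𝓝[>] 0) (𝓝 0) := by
      have := (ENNReal.continuous_ofReal.tendsto 0)
      rw [ENNReal.ofReal_zero] at this
      exact this.mono_left nhdsWithin_le_nhds
    have h1 := hlim.eventually (gt_mem_nhds hpos)
    have h2 : ∀ᶠ R : ℝ in 𝓝[>] 0, R < R0 := nhdsWithin_le_nhds (gt_mem_nhds hR0)
    obtain ⟨R, a1, a2, a3⟩ := (h1.and (h2.and self_mem_nhdsWithin)).exists
    exact ⟨R, a3, a2.le, a1.le.trans (min_le_left _ _), a1.le.trans (min_le_right _ _)⟩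
  have hp := hp.mono (ENNReal.ofReal_pos.2 hR) hR1
  have hp' := hp'.mono (ENNReal.ofReal_pos.2 hR) hR2
  have haH : AnalyticOnNhd ℂ H (Metric.ball 0 R) := by
    have := hp.analyticOnNhd; rwa [Metric.eball_ofReal] at this
  have haG : AnalyticOnNhd ℂ G (Metric.ball 0 R) := by
    have := hp'.analyticOnNhd; rwa [Metric.eball_ofReal] at this
  have hcr : ∀ x ∈ Metric.ball (0 : Fin n → ℂ) R, x ≠ 0 → fderiv ℂ H x ≠ 0 := fun x hx hx0 h =>
    hx0 ((hb (y := x) ((Metric.mem_ball.1 hx).trans_le hRR0)).1 h)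
  have hze : ∀ x ∈ Metric.ball (0 : Fin n → ℂ) R, H x = 0 → G x = 0 := fun x hx h =>
    (hb (y := x) ((Metric.mem_ball.1 hx).trans_le hRR0)).2 h
  have hne : ∃ v ∈ Metric.ball (0 : Fin n → ℂ) R, H v ≠ 0 := by
    by_contra! hcon
    have hx : ∃ x ∈ Metric.ball (0 : Fin n → ℂ) R, x ≠ 0 := by
      refine ⟨Pi.single ⟨0, by omega⟩ ((R / 2 : ℝ) : ℂ), ?_, ?_⟩
      · rw [mem_ball_zero_iff, Pi.norm_single, Complex.norm_real, Real.norm_of_nonneg (by positivity)]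
        linarith
      · rw [Ne, Pi.single_eq_zero_iff, Complex.ofReal_eq_zero]
        positivity
    obtain ⟨x, hx, hx0⟩ := hx
    apply hcr x hx hx0
    have : H =ᶠ[𝓝 x] fun _ => 0 := by
      filter_upwards [Metric.isOpen_ball.mem_nhds hx] with y hy using hcon y hy
    rw [this.fderiv_eq]
    simp
  obtain ⟨v, r, hv0, hr, hrv, hs⟩ := exists_slice hR haH hne hH0
  obtain ⟨q, hq, hqe⟩ := avg_analytic hR hp hp' v r hr (by linarith) hs
  refine ⟨mkOn q hq, ?_⟩
  rw [mkOn_mul, mkOn_eq_iff]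
  have hsmall : ∀ᶠ z in 𝓝 (0 : Fin n → ℂ), z ∈ Metric.ball (0 : Fin n → ℂ) (R / 2) :=
    Metric.ball_mem_nhds _ (by positivity)
  have hoff : ∀ᶠ z in 𝓝 (0 : Fin n → ℂ), z ∉ (ℂ ∙ v : Submodule ℂ (Fin n → ℂ)) → G z = q z * H z := by
    filter_upwards [hqe, hsmall] with z hz hzs hzv
    have hzs' : ‖z‖ < R / 2 := mem_ball_zero_iff.1 hzs
    have hin : ∀ ζ ∈ Metric.closedBall (0 : ℂ) r, z + ζ • v ∈ Metric.ball (0 : Fin n → ℂ) R := by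
      intro ζ hζ
      rw [mem_closedBall_zero_iff] at hζ
      rw [mem_ball_zero_iff]
      have h1 := norm_add_le z (ζ • v)
      rw [norm_smul] at h1
      have h2 : ‖ζ‖ * ‖v‖ ≤ r * ‖v‖ := by gcongr
      linarith
    by_cases hHz : H z = 0
    · have hzR : z ∈ Metric.ball (0 : Fin n → ℂ) R := mem_ball_zero_iff.2 (by linarith)
      rw [hHz, mul_zero, hze z hzR hHz]
    have haf : ∀ ζ : ℂ, AnalyticAt ℂ (fun ζ : ℂ => z + ζ • v) ζ := fun ζ =>
      analyticAt_const.add (analyticAt_id.smul analyticAt_const)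
    have hsl := slice_lemma (fun ζ => G (z + ζ • v)) (fun ζ => H (z + ζ • v)) r hr
      (fun ζ hζ => AnalyticAt.comp (g := G) (f := fun ζ : ℂ => z + ζ • v) (haG _ (hin ζ hζ)) (haf ζ))
      (fun ζ hζ => AnalyticAt.comp (g := H) (f := fun ζ : ℂ => z + ζ • v) (haH _ (hin ζ hζ)) (haf ζ))
      hz.1 (by
        intro ζ hζ
        have hx0 : z + ζ • v ≠ 0 := by
          intro h
          apply hzv
          rw [Submodule.mem_span_singleton]
          exact ⟨-ζ, by rw [neg_smul]; exact (eq_neg_of_add_eq_zero_left h).symm⟩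
        obtain ⟨C, hC⟩ := local_bound (haH _ (hin ζ hζ)) (haG _ (hin ζ hζ))
          (by filter_upwards [Metric.isOpen_ball.mem_nhds (hin ζ hζ)] with y hy using hze y hy)
          (hcr _ (hin ζ hζ) hx0)
        exact ⟨C, (haf ζ).continuousAt.eventually hC⟩)
      (by simpa using hHz)
    rw [hz.2, hsl]
    simp only [zero_smul, add_zero]
    field_simp
  have hcts : ∀ᶠ z in 𝓝 (0 : Fin n → ℂ), ContinuousAt (fun z => G z - q z * H z) z := by
    filter_upwards [hq.eventually_analyticAt, hG.eventually_analyticAt, hH.eventually_analyticAt] with z a b c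
    exact b.continuousAt.sub (a.continuousAt.mul c.continuousAt)
  filter_upwards [hoff.eventually_nhds, hcts] with z hz hc
  by_contra hcon
  have h1 := hc.eventually_ne (sub_ne_zero.2 hcon)
  obtain ⟨y, hy1, hy2⟩ := mem_closure_iff_nhds.1 (dense_compl_line hn v z) _ (h1.and hz)
  exact hy1.1 (sub_eq_zero.2 (hy1.2 hy2))

lemma br_mul_jac {n : ℕ} (f h : On n) (X : Set (Fin n → ℂ))
    (hdiv : ∀ η ∈ ThetaX n X, ∃ k : On n, applyVF η h = k * h) :
    BRIdeal n X f * Jac n h ≤ Jmin n f h ⊔ Ideal.span {h} := by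
  rw [Ideal.mul_le]
  rintro P hP Q hQ
  obtain ⟨η, hη, rfl⟩ := hP
  obtain ⟨β, hβ⟩ := hdiv η hη
  obtain ⟨ξ, rfl⟩ := (Ideal.mem_span_range_iff_exists_fun).1 hQ
  have hid := minors_identity (fun j => pd j f) (fun j => pd j h) η ξ
  have e1 : gradMap n f η = ∑ j, pd j f * η j := by
    change ∑ j, η j * pd j f = _
    exact Finset.sum_congr rfl fun j _ => mul_comm _ _
  have e2 : ∑ j, ξ j * pd j h = ∑ j, pd j h * ξ j :=
    Finset.sum_congr rfl fun j _ => mul_comm _ _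
  have e3 : ∑ j, pd j h * η j = β * h := by
    rw [← hβ]
    exact Finset.sum_congr rfl fun j _ => mul_comm _ _
  rw [e1, e2, ← sub_add_cancel ((∑ j, pd j f * η j) * ∑ j, pd j h * ξ j)
    ((∑ j, pd j f * ξ j) * ∑ k, pd k h * η k), hid]
  refine Ideal.add_mem _ ?_ ?_
  · refine (le_sup_left : Jmin n f h ≤ _) ?_
    refine Ideal.sum_mem _ fun j _ => Ideal.sum_mem _ fun k _ => Ideal.mul_mem_right _ _ ?_
    exact Ideal.subset_span ⟨(j, k), rfl⟩
  · rw [e3, ← mul_assoc]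
    exact (le_sup_right : Ideal.span {h} ≤ _) (Ideal.mul_mem_left _ _ (Ideal.mem_span_singleton_self h))

/-- Claim 4.4: let `f ∈ 𝔪² ∖ 𝔪³` and `h ∈ 𝔪²` have isolated singularities at the origin
and set `X = h⁻¹(0)`. If there is a logarithmic vector field `δ ∈ Θ_X` with `δ(0) = 0`,
`δ(f) = f`, whose eigenvalues are rational with at least one of them non-positive, then
`μ_X(f) = ∞`. -/
theorem muX_infinite_of_nonpositive_weight (n : ℕ)
    (f : On n) (hf2 : f ∈ (mId n) ^ 2) (hf3 : f ∉ (mId n) ^ 3)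
    (hfiso : FiniteDimensional ℂ (On n ⧸ Jac n f))
    (H : (Fin n → ℂ) → ℂ) (hH : AnalyticAt ℂ H 0) (hH0 : H 0 = 0)
    (hHsing : mkOn H hH ∈ (mId n) ^ 2)
    (hHiso : FiniteDimensional ℂ (On n ⧸ Jac n (mkOn H hH)))
    (δ : Fin n → On n) (hδX : δ ∈ ThetaX n (H ⁻¹' {0})) (hδ0 : ∀ i, δ i ∈ mId n)
    (hδf : applyVF δ f = f)
    (w : Fin n → ℚ) (hw : EigsEq δ w) (hneg : ∃ i, w i ≤ 0) :
    ¬ FiniteDimensional ℂ (On n ⧸ BRIdeal n (H ⁻¹' {0}) f) := by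
  intro hfin
  have hvf : vfD δ f = f := by rw [vfD_apply, hδf]
  obtain ⟨N1, hN1⟩ := mpow_le_of_finite _ hfiso
  obtain ⟨N2, hN2⟩ := mpow_le_of_finite _ hHiso
  obtain ⟨N3, hN3⟩ := mpow_le_of_finite _ hfin
  have hn := two_le_n hδ0 f hvf hf2 w hw hneg N1 hN1
  have hIX : mkOn H hH ∈ IX n (H ⁻¹' {0}) :=
    (mem_IX _ hH).2 (Filter.Eventually.of_forall fun x hx => hx)
  have hdiv : ∀ η ∈ ThetaX n (H ⁻¹' {0}), ∃ k : On n, applyVF η (mkOn H hH) = k * mkOn H hH :=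
    fun η hη => hartogs hn hH hH0 N2 hN2 _ (hη _ hIX)
  obtain ⟨α, hα⟩ := hdiv δ hδX
  have hprod : mId n ^ (N3 + N2) ≤ Jmin n f (mkOn H hH) ⊔ Ideal.span {mkOn H hH} := by
    rw [pow_add]
    exact (Ideal.mul_mono hN3 hN2).trans (br_mul_jac f (mkOn H hH) _ hdiv)
  have hmono : ∀ {a b : ℕ}, a ≤ b → mId n ^ b ≤ mId n ^ a := fun h => Ideal.pow_le_pow_right h
  exact formal_contra hδ0 f hvf hf2 w hw hneg (N1 + (N3 + N2)) (mkOn H hH) α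
    (by rw [vfD_apply, hα]) hHsing ((hmono (by omega)).trans hN1)
    ((hmono (by omega)).trans (hN2.trans le_sup_left)) ((hmono (by omega)).trans hprod)

end
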